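/- arXiv:2604.06031 — 2 statements merged into one kernel-verified Lean document; each statement's English description precedes it below -/
import Mathlib

section
/- Let ρ be a map as above such that (K, ⊴_ρ) is a 3-ladder. Then (K, ⊴_ρ) is a maximal 3-ladder if and only if the family {ρ(0,α) : 0 < α < ω1} is a dominating family in ω^ω. -/
/-- The first uncountable ordinal `ω₁`, as the type of ordinals `< ω₁`. -/
abbrev Omega1 : Type 1 := {o : Ordinal // o < (Cardinal.aleph 1).ord}

/-- The ordinal `0` as an element of `ω₁`. -/
def omega1Zero : Omega1 :=
  ⟨0, by rw [Cardinal.lt_ord]; simpa using Cardinal.aleph_pos 1⟩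

/-- The underlying set `K = {0} ∪ (ω₁ × ω × ω)`; `none` plays the role of `0`. -/
abbrev KType : Type 1 := Option (Omega1 × ℕ × ℕ)

/-- The relation `⊴_ρ` on `K` induced by `ρ`: `0 ⊴ x` for all `x`, and
`(α,n,m) ⊴ (β,n',m')` iff `α ≤ β`, `n ≤ n'`, `m ≤ m'` and `ρ α β n ≤ m'`. -/
def KRel (ρ : Omega1 → Omega1 → ℕ → ℕ) : KType → KType → Prop
  | none, _ => True
  | some _, none => False
  | some (α, n, m), some (β, n', m') => α ≤ β ∧ n ≤ n' ∧ m ≤ m' ∧ ρ α β n ≤ m'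

/-- The strict version of a relation. -/
def RelLt {X : Type*} (r : X → X → Prop) (x y : X) : Prop := r x y ∧ x ≠ y

/-- `z` is a lower cover of `x` with respect to the relation `r`. -/
def RelCovBy {X : Type*} (r : X → X → Prop) (z x : X) : Prop :=
  RelLt r z x ∧ ∀ y, ¬ (RelLt r z y ∧ RelLt r y x)

/-- `(X, r)` is an `n`-ladder: `r` is a partial order in which every pair of
elements has a least upper bound and a greatest lower bound (a lattice), which
is lower finite, and in which every element has at most `n` lower covers. -/
def RelIsNLadder {X : Type*} (r : X → X → Prop) (n : ℕ) : Prop :=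
  IsPartialOrder X r ∧
  (∀ x y : X, ∃ z, r x z ∧ r y z ∧ ∀ w, r x w → r y w → r z w) ∧
  (∀ x y : X, ∃ z, r z x ∧ r z y ∧ ∀ w, r w x → r w y → r w z) ∧
  (∀ x : X, {y : X | r y x}.Finite) ∧
  (∀ x : X, {z : X | RelCovBy r z x}.ncard ≤ n)

/-- `P` is an `n`-ladder: a nonempty lower finite lattice in which every element
has at most `n` lower covers. -/
def IsNLadder (P : Type*) [Lattice P] (n : ℕ) : Prop :=
  Nonempty P ∧ (∀ x : P, (Set.Iic x).Finite) ∧ ∀ x : P, {y : P | y ⋖ x}.ncard ≤ n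

/-- `(X, r)` is a maximal `n`-ladder: an `n`-ladder which is not
order-isomorphic to a proper ideal of any `n`-ladder. -/
def RelIsMaximalNLadder {X : Type 1} (r : X → X → Prop) (n : ℕ) : Prop :=
  RelIsNLadder r n ∧
    ¬ ∃ (Q : Type 1) (_ : Lattice Q) (I : Order.Ideal Q),
        IsNLadder Q n ∧ I.IsProper ∧
        ∃ e : X ≃ ↥I, ∀ x y : X, r x y ↔ e x ≤ e y

/-- `D` is a dominating family in `ω^ω`: every `f : ω → ω` is eventually
strictly below some member of `D`. -/
def IsDominating (D : Set (ℕ → ℕ)) : Prop :=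
  ∀ f : ℕ → ℕ, ∃ g ∈ D, ∀ᶠ k in Filter.atTop, f k < g k

/-!
Suppose no `ρ(0, α)` dominates `f`, where `f` may be taken strictly increasing. The points
`(α, n, f n)` with `ρ(0, α)(n) ≤ f n` then form a cofinal, meet-closed subset of `K` in which every
point has at most two lower covers, one with the same `α` and one with the same `n`. Placing a copy
of this subset on top of `K` adds one lower cover to each copied point and yields a 3-ladder that
has `K` as a proper ideal.

Conversely, let `K` be a proper ideal of a 3-ladder `Q` and let `x ∈ Q \ K`. Since `ω₁` is
uncountable, some `(α₀, 0, 0)` lies below no `x ⊔ (0, n, m)`. For each `n` choose `F n` such that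
`(0, 0, F n)` is not below `x ⊔ (α₀, 0, 0) ⊔ (0, n + 1, 0)`. In a 3-ladder one of any four elements
lies below the join of the other three, and for `x`, `(α₀, 0, 0)`, `(0, n + 1, 0)`, `(0, 0, F n)`
only the third can. If `F <* ρ(0, α)`, take a large `n` that is maximal with `(0, n, 0)` below
`q = x ⊔ (α₀, 0, 0) ⊔ (α, 0, 0) ⊔ (0, N, 0)`. As `(0, n, 0) ⊔ (α, 0, 0) = (α, n, ρ(0, α)(n))`, also
`(0, 0, F n) ≤ q`, hence `(0, n + 1, 0) ≤ q`, contradicting the choice of `n`.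
-/

open Filter Function Set

universe u

theorem exists_strictMono_ge (f : ℕ → ℕ) : ∃ g, StrictMono g ∧ f ≤ g :=
  ⟨fun n => partialSups f n + n, (partialSups f).monotone.add_strictMono strictMono_id,
    fun n => (le_partialSups f n).trans (Nat.le_add_right _ _)⟩

/-! ### Lower finite orders -/

/-- A preorder is lower finite if all its principal lower sets are finite; this is the finiteness
clause of `IsNLadder`. -/
def LowerFinite (α : Type*) [Preorder α] : Prop := ∀ x : α, (Iic x).Finite

namespace LowerFinite

section Preorder

variable {α ι κ : Type*} [Preorder α] {g : ι → α}

theorem finite_setOf_le (hα : LowerFinite α) (hg : Injective g) (q : α) : {i | g i ≤ q}.Finite :=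
  (hα q).preimage hg.injOn

theorem exists_not_le [Infinite ι] (hα : LowerFinite α) (hg : Injective g) (q : α) :
    ∃ i, ¬ g i ≤ q :=
  (hα.finite_setOf_le hg q).exists_notMem

theorem exists_forall_not_le [Uncountable ι] [Countable κ] (hα : LowerFinite α)
    (hg : Injective g) (q : κ → α) : ∃ i, ∀ k, ¬ g i ≤ q k := by
  have hcount : (⋃ k, {i | g i ≤ q k}).Countable :=
    countable_iUnion fun k => (hα.finite_setOf_le hg (q k)).countable
  obtain ⟨i, hi⟩ := (ne_univ_iff_exists_notMem (⋃ k, {i | g i ≤ q k})).1 fun h =>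
    not_countable_univ (h ▸ hcount)
  exact ⟨i, fun k hk => hi (mem_iUnion.2 ⟨k, hk⟩)⟩

theorem exists_ge_le_and_not_succ_le (hα : LowerFinite α) {g : ℕ → α} (hg : Injective g)
    {N : ℕ} {q : α} (hN : g N ≤ q) : ∃ n ≥ N, g n ≤ q ∧ ¬ g (n + 1) ≤ q := by
  obtain ⟨n, hNn, hn⟩ := (hα.finite_setOf_le hg q).exists_le_maximal hN
  exact ⟨n, hNn, hn.prop, fun h => (hn.le_of_ge h n.le_succ).not_gt n.lt_succ_self⟩

theorem finite_setOf_covBy (hα : LowerFinite α) (x : α) : {y | y ⋖ x}.Finite :=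
  (hα x).subset fun _ hy => hy.le

end Preorder

theorem exists_le_covBy {α : Type*} [PartialOrder α] (hα : LowerFinite α) {a b : α} (h : a < b) :
    ∃ c, a ≤ c ∧ c ⋖ b := by
  have hfin : (Ico a b).Finite := (hα b).subset fun _ hx => hx.2.le
  obtain ⟨c, hac, hc⟩ := hfin.exists_le_maximal (left_mem_Ico.2 h)
  exact ⟨c, hac, hc.prop.2,
    fun d hcd hdb => hcd.not_ge (hc.le_of_ge ⟨hac.trans hcd.le, hdb⟩ hcd.le)⟩

section SemilatticeInf

variable {α : Type*} [SemilatticeInf α]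

theorem exists_isLUB (hα : LowerFinite α) {s : Set α} (hs : BddAbove s) : ∃ z, IsLUB s z := by
  obtain ⟨u, hu⟩ := hs
  have hfin : (Iic u ∩ upperBounds s).Finite := (hα u).inter_of_left _
  obtain ⟨z, -, hz⟩ := hfin.exists_le_minimal ⟨le_refl u, hu⟩
  refine ⟨z, hz.prop.2, fun w hw => ?_⟩
  have hzw : z ⊓ w ∈ Iic u ∩ upperBounds s :=
    ⟨inf_le_left.trans hz.prop.1, fun y hy => le_inf (hz.prop.2 hy) (hw hy)⟩
  exact (hz.le_of_le hzw inf_le_left).trans inf_le_right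

variable [IsDirectedOrder α]

theorem exists_isLUB_pair (hα : LowerFinite α) (x y : α) : ∃ z, IsLUB {x, y} z :=
  hα.exists_isLUB (bddAbove_singleton.insert x)

/-- The lattice structure on a directed, lower finite meet-semilattice; joins are chosen by
`LowerFinite.exists_isLUB_pair`. -/
noncomputable abbrev lattice (hα : LowerFinite α) : Lattice α where
  sup x y := (hα.exists_isLUB_pair x y).choose
  le_sup_left x y := (hα.exists_isLUB_pair x y).choose_spec.1 (mem_insert x {y})
  le_sup_right x y := (hα.exists_isLUB_pair x y).choose_spec.1 (mem_insert_of_mem x rfl)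
  sup_le x y _ hx hy := (hα.exists_isLUB_pair x y).choose_spec.2 (by simp [hx, hy])

end SemilatticeInf

end LowerFinite

/-! ### Lower covers and breadth -/

theorem isAntichain_setOf_covBy {α : Type*} [PartialOrder α] (x : α) :
    IsAntichain (· ≤ ·) {y | y ⋖ x} :=
  fun _ ha _ hb hne hab => ha.2 (hab.lt_of_ne hne) hb.lt

theorem ncard_setOf_covBy_le_two {α : Type*} [PartialOrder α] {x : α} {s t : Set α}
    (hs : IsChain (· ≤ ·) s) (ht : IsChain (· ≤ ·) t) (h : {y | y ⋖ x} ⊆ s ∪ t) :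
    {y | y ⋖ x}.ncard ≤ 2 := by
  have ncard_inter_le {r : Set α} (hr : IsChain (· ≤ ·) r) : ({y | y ⋖ x} ∩ r).ncard ≤ 1 := by
    have hsub := inter_subsingleton_of_isAntichain_of_isChain (isAntichain_setOf_covBy x) hr
    exact (ncard_le_one hsub.finite).2 fun _ ha _ hb => hsub ha hb
  calc {y | y ⋖ x}.ncard = ({y | y ⋖ x} ∩ s ∪ {y | y ⋖ x} ∩ t).ncard := by
        rw [← inter_union_distrib_left, inter_eq_left.2 h]
    _ ≤ ({y | y ⋖ x} ∩ s).ncard + ({y | y ⋖ x} ∩ t).ncard := ncard_union_le _ _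
    _ ≤ 2 := add_le_add (ncard_inter_le hs) (ncard_inter_le ht)

namespace IsNLadder

variable {Q : Type*} [Lattice Q] {n : ℕ}

theorem lowerFinite (hQ : IsNLadder Q n) : LowerFinite Q := hQ.2.1

/- If no `z i ≤ y i`, then each `y i` lies below a lower cover of `⨆ i, z i`, and distinct `i` need
distinct lower covers. -/
theorem exists_le_of_forall_ne_le (hQ : IsNLadder Q n) {ι : Type*} [Fintype ι]
    (hι : n < Fintype.card ι) {z y : ι → Q} (hzy : ∀ i j, j ≠ i → z j ≤ y i) :
    ∃ i, z i ≤ y i := by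
  by_contra! hnot
  have : Nonempty ι := Fintype.card_pos_iff.1 (Nat.zero_lt_of_lt hι)
  let t : Q := Finset.univ.sup' Finset.univ_nonempty z
  have hzt (i : ι) : z i ≤ t := Finset.le_sup' z (Finset.mem_univ i)
  have hlt (i : ι) : y i ⊓ t < t :=
    inf_lt_right.2 fun h => hnot i ((hzt i).trans h)
  choose c hyc hct using fun i => hQ.lowerFinite.exists_le_covBy (hlt i)
  have hzc (i j : ι) (hji : j ≠ i) : z j ≤ c i := (le_inf (hzy i j hji) (hzt j)).trans (hyc i)
  have hinj : Injective c := by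
    intro i j hij
    by_contra hne
    refine (hct i).lt.not_ge (Finset.sup'_le _ _ fun k _ => ?_)
    rcases eq_or_ne k i with rfl | hki
    · exact hij ▸ hzc j k hne
    · exact hzc i k hki
  have hcard : Fintype.card ι ≤ n := calc
    Fintype.card ι = (range c).ncard := by
      rw [ncard_range_of_injective hinj, Nat.card_eq_fintype_card]
    _ ≤ {y | y ⋖ t}.ncard :=
      ncard_le_ncard (range_subset_iff.2 hct) (hQ.lowerFinite.finite_setOf_covBy t)
    _ ≤ n := hQ.2.2 t
  exact hι.not_ge hcard

theorem le_sup_of_four (hQ : IsNLadder Q 3) (a b c d : Q) :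
    a ≤ b ⊔ c ⊔ d ∨ b ≤ a ⊔ c ⊔ d ∨ c ≤ a ⊔ b ⊔ d ∨ d ≤ a ⊔ b ⊔ c := by
  obtain ⟨i, hi⟩ := hQ.exists_le_of_forall_ne_le (ι := Fin 4) (by simp) (z := ![a, b, c, d])
    (y := ![b ⊔ c ⊔ d, a ⊔ c ⊔ d, a ⊔ b ⊔ d, a ⊔ b ⊔ c]) (by
      intro i j hji
      fin_cases i <;> fin_cases j <;>
        first
        | exact absurd rfl hji
        | exact le_sup_right
        | exact le_sup_of_le_left le_sup_left
        | exact le_sup_of_le_left le_sup_right)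
  fin_cases i
  exacts [.inl hi, .inr (.inl hi), .inr (.inr (.inl hi)), .inr (.inr (.inr hi))]

end IsNLadder

/-! ### Maximal ladders -/

/-- The lattice counterpart of `RelIsMaximalNLadder`: an `n`-ladder that is not isomorphic to a
proper ideal of an `n`-ladder in the same universe. -/
def IsMaximalNLadder (P : Type u) [Lattice P] (n : ℕ) : Prop :=
  IsNLadder P n ∧ ∀ (Q : Type u) [Lattice Q] (I : Order.Ideal Q),
    IsNLadder Q n → I.IsProper → IsEmpty (P ≃o I)

theorem coe_orderIso_ideal_sup {P Q : Type*} [SemilatticeSup P] [SemilatticeSup Q]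
    {I : Order.Ideal Q} (e : P ≃o I) (x y : P) : (e (x ⊔ y) : Q) = (e x : Q) ⊔ e y := by
  have hmem : (e x : Q) ⊔ e y ∈ I := Order.Ideal.sup_mem (e x).2 (e y).2
  refine le_antisymm ?_ (sup_le (e.monotone le_sup_left) (e.monotone le_sup_right))
  have hle : x ⊔ y ≤ e.symm ⟨_, hmem⟩ :=
    sup_le (e.le_symm_apply.2 le_sup_left) (e.le_symm_apply.2 le_sup_right)
  exact e.le_symm_apply.1 hle

theorem not_isMaximalNLadder_of_isLowerSet_range {P Q : Type u} [Lattice P] [Lattice Q] {n : ℕ}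
    (hQ : IsNLadder Q n) (f : P ↪o Q) (hlower : IsLowerSet (range f)) {q : Q}
    (hq : q ∉ range f) : ¬ IsMaximalNLadder P n := by
  rintro ⟨⟨⟨x⟩, -⟩, hmax⟩
  have hdir : DirectedOn (· ≤ ·) (range f) := by
    rintro _ ⟨a, rfl⟩ _ ⟨b, rfl⟩
    exact ⟨f (a ⊔ b), mem_range_self _, f.monotone le_sup_left, f.monotone le_sup_right⟩
  let I : Order.Ideal Q := Order.IsIdeal.toIdeal ⟨hlower, ⟨f x, mem_range_self x⟩, hdir⟩
  exact (hmax Q I hQ (Order.Ideal.isProper_of_notMem (p := q) hq)).false f.orderIso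

/-! ### Placing a copy of a subset on top of a ladder -/

/-- The order obtained from `P` by placing above each `c ∈ C` a copy of `c`, as a suborder of
`P × Bool`: the second coordinate is `true` on the copies. -/
abbrev AdjoinCopy {P : Type u} (C : Set P) : Type u := {p : P × Bool // p.2 = true → p.1 ∈ C}

namespace AdjoinCopy

section PartialOrder

variable {P : Type u} [PartialOrder P] {C : Set P}

/-- The embedding of `P` as the original part of `AdjoinCopy C`. -/
def inl (C : Set P) : P ↪o AdjoinCopy C :=
  OrderEmbedding.ofMapLEIff (fun x => ⟨(x, false), nofun⟩) fun _ _ => by simp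

/-- The embedding of `C` as the copied part of `AdjoinCopy C`. -/
def inr (C : Set P) : C ↪o AdjoinCopy C :=
  OrderEmbedding.ofMapLEIff (fun c => ⟨(c, true), fun _ => c.2⟩) fun _ _ => by simp

theorem inl_lt_inr (c : C) : inl C c < inr C c :=
  Subtype.mk_lt_mk.2 (Prod.mk_lt_mk_iff_right.2 Bool.false_lt_true)

theorem inl_le_inr_iff {x : P} {c : C} : inl C x ≤ inr C c ↔ x ≤ c := by
  simp [inl, inr]

theorem not_inr_le_inl (c : C) (x : P) : ¬ inr C c ≤ inl C x := by
  simp [inl, inr]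

theorem eq_inl_or_eq_inr : ∀ q : AdjoinCopy C, (∃ x, inl C x = q) ∨ ∃ c, inr C c = q
  | ⟨(x, false), _⟩ => .inl ⟨x, rfl⟩
  | ⟨(x, true), hx⟩ => .inr ⟨⟨x, hx rfl⟩, rfl⟩

theorem isLowerSet_range_inl : IsLowerSet (range (inl C)) := by
  rintro _ q hq ⟨x, rfl⟩
  rcases eq_inl_or_eq_inr q with hx | ⟨c, rfl⟩
  · exact hx
  · exact absurd hq (not_inr_le_inl c x)

theorem lowerFinite (hP : LowerFinite P) : LowerFinite (AdjoinCopy C) := fun q =>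
  (((hP q.1.1).prod (toFinite (Iic q.1.2))).preimage Subtype.val_injective.injOn).subset
    fun _ hq => ⟨hq.1, hq.2⟩

theorem ncard_setOf_covBy_inl_le (hP : LowerFinite P) (x : P) :
    {q | q ⋖ inl C x}.ncard ≤ {y | y ⋖ x}.ncard := by
  have hsub : {q | q ⋖ inl C x} ⊆ inl C '' {y | y ⋖ x} := by
    intro q hq
    obtain ⟨y, rfl⟩ := isLowerSet_range_inl hq.le (mem_range_self x)
    exact ⟨y, hq.of_image, rfl⟩
  have hfin := hP.finite_setOf_covBy x
  exact (ncard_le_ncard hsub (hfin.image _)).trans (ncard_image_le hfin)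

theorem ncard_setOf_covBy_inr_le (hP : LowerFinite P) (c : C) :
    {q | q ⋖ inr C c}.ncard ≤ {d : C | d ⋖ c}.ncard + 1 := by
  have hsub : {q | q ⋖ inr C c} ⊆ insert (inl C c) (inr C '' {d | d ⋖ c}) := by
    intro q hq
    rcases eq_inl_or_eq_inr q with ⟨x, rfl⟩ | ⟨d, rfl⟩
    · have hxc : inl C x ≤ inl C c := (inl C).monotone (inl_le_inr_iff.1 hq.le)
      exact .inl (hxc.eq_of_not_lt fun hlt => hq.2 hlt (inl_lt_inr c))
    · exact .inr ⟨d, hq.of_image, rfl⟩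
  have hfin : {d : C | d ⋖ c}.Finite :=
    ((hP c).preimage Subtype.val_injective.injOn).subset fun _ hd => hd.le
  calc {q | q ⋖ inr C c}.ncard ≤ (insert (inl C c) (inr C '' {d | d ⋖ c})).ncard :=
        ncard_le_ncard hsub ((hfin.image _).insert _)
    _ ≤ (inr C '' {d | d ⋖ c}).ncard + 1 := ncard_insert_le _ _
    _ ≤ {d : C | d ⋖ c}.ncard + 1 := Nat.add_le_add_right (ncard_image_le hfin) 1

end PartialOrder

theorem isDirectedOrder {P : Type u} [SemilatticeSup P] {C : Set P} (hC : IsCofinal C) :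
    IsDirectedOrder (AdjoinCopy C) where
  directed p q := by
    obtain ⟨c, hc, hpq⟩ := hC (p.1.1 ⊔ q.1.1)
    exact ⟨inr C ⟨c, hc⟩, ⟨le_sup_left.trans hpq, Bool.le_true _⟩,
      ⟨le_sup_right.trans hpq, Bool.le_true _⟩⟩

/-- The meet-semilattice structure on `AdjoinCopy C` inherited from `P × Bool`. -/
noncomputable abbrev semilatticeInf {P : Type u} [SemilatticeInf P] {C : Set P} (hC : InfClosed C) :
    SemilatticeInf (AdjoinCopy C) :=
  Subtype.semilatticeInf fun p q hp hq hpq =>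
    have hbool : p.2 = true ∧ q.2 = true := by simpa using hpq
    hC (hp hbool.1) (hq hbool.2)

end AdjoinCopy

open AdjoinCopy in
theorem IsNLadder.not_isMaximalNLadder_of_isCofinal {P : Type u} [Lattice P] {n : ℕ}
    (hP : IsNLadder P (n + 1)) {C : Set P} (hcofinal : IsCofinal C) (hinf : InfClosed C)
    (hcov : ∀ c : C, {d : C | d ⋖ c}.ncard ≤ n) : ¬ IsMaximalNLadder P (n + 1) := by
  obtain ⟨x⟩ := hP.1
  obtain ⟨c, hc, -⟩ := hcofinal x
  let := semilatticeInf hinf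
  have := isDirectedOrder hcofinal
  have hfin : LowerFinite (AdjoinCopy C) := AdjoinCopy.lowerFinite hP.lowerFinite
  let := hfin.lattice
  have hQ : IsNLadder (AdjoinCopy C) (n + 1) := by
    refine ⟨⟨inl C x⟩, hfin, fun q => ?_⟩
    rcases eq_inl_or_eq_inr q with ⟨y, rfl⟩ | ⟨d, rfl⟩
    · exact (ncard_setOf_covBy_inl_le hP.lowerFinite y).trans (hP.2.2 y)
    · exact (ncard_setOf_covBy_inr_le hP.lowerFinite d).trans (Nat.add_le_add_right (hcov d) 1)
  refine not_isMaximalNLadder_of_isLowerSet_range hQ (inl C) isLowerSet_range_inl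
    (q := inr C ⟨c, hc⟩) ?_
  rintro ⟨y, hy⟩
  exact not_inr_le_inl ⟨c, hc⟩ y hy.ge

/-! ### Ladders given by a relation -/

theorem relCovBy_le_iff {α : Type*} [PartialOrder α] {x y : α} :
    RelCovBy (· ≤ ·) x y ↔ x ⋖ y := by
  simp only [RelCovBy, RelLt, ← lt_iff_le_and_ne, CovBy, not_and]

namespace RelIsNLadder

variable {X : Type*} {r : X → X → Prop} {n : ℕ}

/-- The lattice whose order is the relation of an `n`-ladder. -/
noncomputable abbrev lattice (h : RelIsNLadder r n) : Lattice X where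
  le := r
  le_refl := h.1.refl
  le_trans := h.1.trans
  le_antisymm := h.1.antisymm
  sup x y := (h.2.1 x y).choose
  le_sup_left x y := (h.2.1 x y).choose_spec.1
  le_sup_right x y := (h.2.1 x y).choose_spec.2.1
  sup_le x y z := (h.2.1 x y).choose_spec.2.2 z
  inf x y := (h.2.2.1 x y).choose
  inf_le_left x y := (h.2.2.1 x y).choose_spec.1
  inf_le_right x y := (h.2.2.1 x y).choose_spec.2.1
  le_inf x y z := (h.2.2.1 y z).choose_spec.2.2 x

theorem isNLadder [hX : Nonempty X] (h : RelIsNLadder r n) :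
    letI := h.lattice; IsNLadder X n := by
  let := h.lattice
  refine ⟨hX, h.2.2.2.1, fun x => ?_⟩
  simp only [← relCovBy_le_iff]
  exact h.2.2.2.2 x

theorem relIsMaximalNLadder_iff {X : Type 1} [Nonempty X] {r : X → X → Prop}
    (h : RelIsNLadder r n) :
    RelIsMaximalNLadder r n ↔ letI := h.lattice; IsMaximalNLadder X n := by
  let := h.lattice
  refine ⟨fun hmax => ⟨h.isNLadder, fun Q _ I hQ hI => ⟨fun e => ?_⟩⟩, fun hmax => ⟨h, ?_⟩⟩
  · exact hmax.2 ⟨Q, _, I, hQ, hI, e.toEquiv, fun _ _ => e.le_iff_le.symm⟩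
  · rintro ⟨Q, _, I, hQ, hI, e, he⟩
    exact (hmax.2 Q I hQ hI).false ⟨e, (he _ _).symm⟩

end RelIsNLadder

/-! ### The ladder `K` -/

theorem omega1Zero_le (α : Omega1) : omega1Zero ≤ α := Subtype.coe_le_coe.1 (zero_le (a := α.1))

instance uncountable_omega1 : Uncountable Omega1 := by
  have hmk : Cardinal.mk Omega1 = Cardinal.lift.{1, 0} (Cardinal.aleph 1).ord.card :=
    Cardinal.mk_Iio_ordinal _
  rw [← Cardinal.aleph0_lt_mk_iff, hmk, Cardinal.card_ord]
  simp

/-- The set `K`, as a type synonym that carries the order `⊴_ρ`. -/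
def LadderK (_ρ : Omega1 → Omega1 → ℕ → ℕ) : Type 1 := KType

namespace LadderK

variable {ρ : Omega1 → Omega1 → ℕ → ℕ}

/-- The point `(α, n, m)` of `K`. -/
def mk (α : Omega1) (n m : ℕ) : LadderK ρ := some (α, n, m)

instance : Nonempty (LadderK ρ) := ⟨none⟩

theorem mk_inj {α β : Omega1} {n m n' m' : ℕ} :
    (mk α n m : LadderK ρ) = mk β n' m' ↔ α = β ∧ n = n' ∧ m = m' :=
  Option.some_inj.trans (by simp)

variable [hρ : Fact (RelIsNLadder (KRel ρ) 3)]

noncomputable instance : Lattice (LadderK ρ) := hρ.out.lattice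

theorem isNLadder : IsNLadder (LadderK ρ) 3 := hρ.out.isNLadder

theorem mk_le_mk {α β : Omega1} {n m n' m' : ℕ} :
    (mk α n m : LadderK ρ) ≤ mk β n' m' ↔ α ≤ β ∧ n ≤ n' ∧ m ≤ m' ∧ ρ α β n ≤ m' := Iff.rfl

theorem exists_eq_mk_of_mk_le {α : Omega1} {n m : ℕ} :
    ∀ {v : LadderK ρ}, mk α n m ≤ v → ∃ β n' m', v = mk β n' m'
  | some (β, n', m'), _ => ⟨β, n', m', rfl⟩

variable (ρ) in
theorem rho_self (α : Omega1) (n : ℕ) : ρ α α n = 0 :=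
  Nat.le_zero.1 (mk_le_mk.1 (le_refl (mk α n 0 : LadderK ρ))).2.2.2

theorem mk_le_mk_of_le (α : Omega1) {n m n' m' : ℕ} (hn : n ≤ n') (hm : m ≤ m') :
    (mk α n m : LadderK ρ) ≤ mk α n' m' :=
  mk_le_mk.2 ⟨le_rfl, hn, hm, (rho_self ρ α n).trans_le m'.zero_le⟩

theorem zero_mk_le_mk_iff {α : Omega1} {n m : ℕ} :
    (mk omega1Zero n m : LadderK ρ) ≤ mk α n m ↔ ρ omega1Zero α n ≤ m := by
  simp [mk_le_mk, omega1Zero_le]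

theorem mk_sup_mk {α β : Omega1} (h : α ≤ β) (n m n' m' : ℕ) :
    (mk α n m ⊔ mk β n' m' : LadderK ρ) = mk β (max n n') (max (max m m') (ρ α β n)) := by
  have hα : (mk α n m ⊔ mk β n' m' : LadderK ρ) ≥ mk α n m := le_sup_left
  have hβ : (mk α n m ⊔ mk β n' m' : LadderK ρ) ≥ mk β n' m' := le_sup_right
  have hle : (mk α n m ⊔ mk β n' m' : LadderK ρ) ≤
      mk β (max n n') (max (max m m') (ρ α β n)) :=
    sup_le (mk_le_mk.2 (by simp [h])) (mk_le_mk_of_le β (by simp) (by simp))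
  refine le_antisymm hle ?_
  obtain ⟨γ, k, l, hz⟩ := exists_eq_mk_of_mk_le hα
  rw [hz] at hα hβ hle ⊢
  obtain rfl : γ = β := le_antisymm hle.1 hβ.1
  exact mk_le_mk_of_le γ (max_le hα.2.1 hβ.2.1) (max_le (max_le hα.2.2.1 hβ.2.2.1) hα.2.2.2)

theorem mk_zero_sup_mk (α : Omega1) (n : ℕ) :
    (mk omega1Zero n 0 ⊔ mk α 0 0 : LadderK ρ) = mk α n (ρ omega1Zero α n) := by
  simp [mk_sup_mk (omega1Zero_le α)]

theorem rho_le_of_mk_le {α β γ : Omega1} {n m k l n' m' : ℕ} (h : α ≤ β)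
    (hα : (mk α n m : LadderK ρ) ≤ mk γ n' m') (hβ : (mk β k l : LadderK ρ) ≤ mk γ n' m') :
    ρ α β n ≤ m' := by
  have hsup := sup_le hα hβ
  rw [mk_sup_mk h] at hsup
  exact (le_max_right _ _).trans hsup.2.2.1

/-! ### Unbounded families -/

/-- The points of `K` on the graph of `f` that lie above the point of the graph with the same
`n` and first coordinate `0`. -/
def graphPoints (ρ : Omega1 → Omega1 → ℕ → ℕ) (f : ℕ → ℕ) : Set (LadderK ρ) :=
  {v | ∃ α n, ρ omega1Zero α n ≤ f n ∧ mk α n (f n) = v}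

variable {f : ℕ → ℕ}

theorem isCofinal_graphPoints (hf : StrictMono f)
    (h : ∀ α, ∃ᶠ n in atTop, ρ omega1Zero α n ≤ f n) : IsCofinal (graphPoints ρ f) := by
  have exists_ge (α : Omega1) (n m : ℕ) : ∃ c ∈ graphPoints ρ f, mk α n m ≤ c := by
    obtain ⟨k, hk, hαk⟩ := frequently_atTop.1 (h α) (max n m)
    exact ⟨_, ⟨α, k, hαk, rfl⟩, mk_le_mk_of_le α ((le_max_left n m).trans hk)
      ((le_max_right n m).trans (hk.trans hf.le_apply))⟩
  rintro (_ | ⟨α, n, m⟩)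
  · obtain ⟨c, hc, -⟩ := exists_ge omega1Zero 0 0
    exact ⟨c, hc, trivial⟩
  · exact exists_ge α n m

theorem infClosed_graphPoints (hf : Monotone f) : InfClosed (graphPoints ρ f) := by
  have inf_mem {v w : LadderK ρ} {α β : Omega1} {n k : ℕ} (hnk : n ≤ k)
      (hα : ρ omega1Zero α n ≤ f n) (hβ : ρ omega1Zero β k ≤ f k)
      (hv : mk α n (f n) = v) (hw : mk β k (f k) = w) : v ⊓ w ∈ graphPoints ρ f := by
    subst hv hw
    have hle : mk omega1Zero n (f n) ≤ (mk α n (f n) ⊓ mk β k (f k) : LadderK ρ) :=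
      le_inf (zero_mk_le_mk_iff.2 hα)
        ((mk_le_mk_of_le _ hnk (hf hnk)).trans (zero_mk_le_mk_iff.2 hβ))
    have hge : (mk α n (f n) ⊓ mk β k (f k) : LadderK ρ) ≤ mk α n (f n) := inf_le_left
    obtain ⟨γ, i, j, hz⟩ := exists_eq_mk_of_mk_le hle
    rw [hz] at hle hge ⊢
    obtain rfl : i = n := le_antisymm hge.2.1 hle.2.1
    obtain rfl : j = f i := le_antisymm hge.2.2.1 hle.2.2.1
    exact ⟨γ, i, hle.2.2.2, rfl⟩
  rintro v ⟨α, n, hα, hv⟩ w ⟨β, k, hβ, hw⟩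
  rcases le_total n k with hnk | hkn
  · exact inf_mem hnk hα hβ hv hw
  · exact inf_comm v w ▸ inf_mem hkn hβ hα hw hv

theorem isChain_setOf_mk_le_mk (α : Omega1) (n m : ℕ) :
    IsChain (· ≤ ·) {v : LadderK ρ | v ≤ mk α n m ∧ ∃ β, v = mk β n m} := by
  have mk_le {β γ : Omega1} (hβγ : β ≤ γ) (hβ : (mk β n m : LadderK ρ) ≤ mk α n m)
      (hγ : (mk γ n m : LadderK ρ) ≤ mk α n m) : (mk β n m : LadderK ρ) ≤ mk γ n m :=
    mk_le_mk.2 ⟨hβγ, le_rfl, le_rfl, rho_le_of_mk_le hβγ hβ hγ⟩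
  rintro _ ⟨hβ, β, rfl⟩ _ ⟨hγ, γ, rfl⟩ -
  rcases le_total β γ with h | h
  exacts [.inl (mk_le h hβ hγ), .inr (mk_le h hγ hβ)]

theorem isChain_range_mk_graph (hf : Monotone f) (α : Omega1) :
    IsChain (· ≤ ·) (range fun k => (mk α k (f k) : LadderK ρ)) :=
  Monotone.isChain_range fun _ _ h => mk_le_mk_of_le α h (hf h)

theorem eq_or_eq_of_covBy_graphPoints {α β : Omega1} {n k : ℕ}
    {hα : mk α n (f n) ∈ graphPoints ρ f} {hβ : mk β k (f k) ∈ graphPoints ρ f}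
    (h : (⟨mk β k (f k), hβ⟩ : graphPoints ρ f) ⋖ ⟨mk α n (f n), hα⟩) : k = n ∨ β = α := by
  have hle : (mk β k (f k) : LadderK ρ) ≤ mk α n (f n) := h.le
  have hzero : (mk omega1Zero n (f n) : LadderK ρ) ≤ mk α n (f n) := by
    obtain ⟨_, _, hρα, heq⟩ := hα
    obtain ⟨rfl, rfl, -⟩ := mk_inj.1 heq
    exact zero_mk_le_mk_iff.2 hρα
  have hρβ : ρ omega1Zero β n ≤ f n := rho_le_of_mk_le (omega1Zero_le β) hzero hle
  have hsup : (mk omega1Zero n (f n) ⊔ mk β k (f k) : LadderK ρ) = mk β n (f n) := by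
    rw [mk_sup_mk (omega1Zero_le β), max_eq_left hle.2.1, max_eq_left hle.2.2.1, max_eq_left hρβ]
  have hmid : mk β n (f n) ∈ graphPoints ρ f := ⟨β, n, hρβ, rfl⟩
  have hmid_eq := h.wcovBy.eq_or_eq (c := ⟨mk β n (f n), hmid⟩)
    (mk_le_mk_of_le β hle.2.1 hle.2.2.1) (hsup.symm.trans_le (sup_le hzero hle))
  simp only [Subtype.mk.injEq, mk_inj] at hmid_eq
  exact hmid_eq.imp (fun h => h.2.1.symm) (fun h => h.1)

theorem ncard_setOf_covBy_graphPoints_le_two (hf : Monotone f) (c : graphPoints ρ f) :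
    {d | d ⋖ c}.ncard ≤ 2 := by
  obtain ⟨_, α, n, hα, rfl⟩ := c
  have isChain_preimage {s : Set (LadderK ρ)} (hs : IsChain (· ≤ ·) s) :
      IsChain (· ≤ ·) ((↑) ⁻¹' s : Set (graphPoints ρ f)) :=
    hs.preimage _ _ _ Subtype.val_injective fun _ _ => id
  refine ncard_setOf_covBy_le_two (isChain_preimage (isChain_setOf_mk_le_mk α n (f n)))
    (isChain_preimage (isChain_range_mk_graph hf α)) ?_
  rintro ⟨_, β, k, hβ, rfl⟩ h
  rcases eq_or_eq_of_covBy_graphPoints h with rfl | rfl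
  · exact .inl ⟨h.le, β, rfl⟩
  · exact .inr ⟨k, rfl⟩

theorem not_isMaximalNLadder_of_frequently_le (hf : StrictMono f)
    (h : ∀ α, ∃ᶠ n in atTop, ρ omega1Zero α n ≤ f n) : ¬ IsMaximalNLadder (LadderK ρ) 3 :=
  isNLadder.not_isMaximalNLadder_of_isCofinal (isCofinal_graphPoints hf h)
    (infClosed_graphPoints hf.monotone) (ncard_setOf_covBy_graphPoints_le_two hf.monotone)

theorem exists_eventually_lt_of_isMaximalNLadder (hmax : IsMaximalNLadder (LadderK ρ) 3)
    (f : ℕ → ℕ) : ∃ α, omega1Zero < α ∧ ∀ᶠ k in atTop, f k < ρ omega1Zero α k := by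
  by_contra! hnot
  obtain ⟨g, hg, hfg⟩ := exists_strictMono_ge f
  refine not_isMaximalNLadder_of_frequently_le hg (fun α => ?_) hmax
  rcases (omega1Zero_le α).eq_or_lt with rfl | hα
  · exact Eventually.frequently (.of_forall fun k => (rho_self ρ _ k).trans_le (g k).zero_le)
  · exact (hnot α hα).mono fun k hk => hk.trans (hfg k)

/-! ### Dominating families -/

variable {Q : Type*} [Lattice Q] {I : Order.Ideal Q} (e : LadderK ρ ≃o I) {x : Q}

theorem coe_orderIso_mk_inj {α β : Omega1} {n m n' m' : ℕ} :
    (e (mk α n m) : Q) = e (mk β n' m') ↔ α = β ∧ n = n' ∧ m = m' :=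
  Subtype.coe_inj.trans (e.injective.eq_iff.trans mk_inj)

theorem coe_orderIso_mk_le {α : Omega1} {n m : ℕ} {q : Q}
    (hn : (e (mk omega1Zero n 0) : Q) ≤ q) (hα : (e (mk α 0 0) : Q) ≤ q)
    (hm : m ≤ ρ omega1Zero α n) : (e (mk omega1Zero 0 m) : Q) ≤ q := by
  have hle : (mk omega1Zero 0 m : LadderK ρ) ≤ mk omega1Zero n 0 ⊔ mk α 0 0 := by
    rw [mk_zero_sup_mk]
    exact (mk_le_mk_of_le omega1Zero n.zero_le hm).trans (zero_mk_le_mk_iff.2 le_rfl)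
  calc (e (mk omega1Zero 0 m) : Q) ≤ e (mk omega1Zero n 0 ⊔ mk α 0 0) := e.monotone hle
    _ = (e (mk omega1Zero n 0) : Q) ⊔ e (mk α 0 0) := coe_orderIso_ideal_sup e _ _
    _ ≤ q := sup_le hn hα

theorem exists_forall_not_le_sup (hQ : LowerFinite Q) (x : Q) :
    ∃ α, ∀ n m, ¬ (e (mk α 0 0) : Q) ≤ x ⊔ e (mk omega1Zero n 0) ⊔ e (mk omega1Zero 0 m) := by
  have hinj : Injective fun α => (e (mk α 0 0) : Q) := fun _ _ h =>
    ((coe_orderIso_mk_inj e).1 h).1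
  obtain ⟨α, hα⟩ := hQ.exists_forall_not_le hinj
    fun p : ℕ × ℕ => x ⊔ e (mk omega1Zero p.1 0) ⊔ e (mk omega1Zero 0 p.2)
  exact ⟨α, fun n m => hα (n, m)⟩

theorem exists_mk_le_sup (hQ : IsNLadder Q 3) (hx : x ∉ I) {α : Omega1}
    (hα : ∀ n m, ¬ (e (mk α 0 0) : Q) ≤ x ⊔ e (mk omega1Zero n 0) ⊔ e (mk omega1Zero 0 m))
    (n : ℕ) : ∃ m, (e (mk omega1Zero n 0) : Q) ≤ x ⊔ e (mk α 0 0) ⊔ e (mk omega1Zero 0 m) := by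
  have hinj : Injective fun m => (e (mk omega1Zero 0 m) : Q) := fun _ _ h =>
    ((coe_orderIso_mk_inj e).1 h).2.2
  obtain ⟨m, hm⟩ := hQ.lowerFinite.exists_not_le hinj
    (x ⊔ e (mk α 0 0) ⊔ e (mk omega1Zero n 0))
  rcases hQ.le_sup_of_four x (e (mk α 0 0)) (e (mk omega1Zero n 0)) (e (mk omega1Zero 0 m))
    with hle | hle | hle | hle
  · refine absurd (I.lower hle ?_) hx
    exact Order.Ideal.sup_mem (Order.Ideal.sup_mem (e _).2 (e _).2) (e _).2
  · exact absurd hle (hα n m)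
  · exact ⟨m, hle⟩
  · exact absurd hle hm

theorem exists_forall_not_eventually_lt (e : LadderK ρ ≃o I) (hQ : IsNLadder Q 3) (hx : x ∉ I) :
    ∃ F : ℕ → ℕ, ∀ α, ¬ ∀ᶠ k in atTop, F k < ρ omega1Zero α k := by
  obtain ⟨α₀, hα₀⟩ := exists_forall_not_le_sup e hQ.lowerFinite x
  choose F hF using fun n => exists_mk_le_sup e hQ hx hα₀ (n + 1)
  refine ⟨F, fun α hlt => ?_⟩
  obtain ⟨N, hN⟩ := eventually_atTop.1 hlt
  let q : Q := x ⊔ e (mk α₀ 0 0) ⊔ (e (mk α 0 0) ⊔ e (mk omega1Zero N 0))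
  have hinj : Injective fun n => (e (mk omega1Zero n 0) : Q) := fun _ _ h =>
    ((coe_orderIso_mk_inj e).1 h).2.1
  obtain ⟨n, hNn, hle, hnot⟩ := hQ.lowerFinite.exists_ge_le_and_not_succ_le hinj (q := q)
    (le_sup_right.trans le_sup_right : (e (mk omega1Zero N 0) : Q) ≤ q)
  have hFn : (e (mk omega1Zero 0 (F n)) : Q) ≤ q :=
    coe_orderIso_mk_le e hle (le_sup_left.trans le_sup_right) (hN n hNn).le
  exact hnot ((hF n).trans (sup_le le_sup_left hFn))

theorem isMaximalNLadder_of_forall_exists_eventually_lt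
    (h : ∀ f : ℕ → ℕ, ∃ α, ∀ᶠ k in atTop, f k < ρ omega1Zero α k) :
    IsMaximalNLadder (LadderK ρ) 3 := by
  refine ⟨isNLadder, fun Q _ I hQ hI => ⟨fun e => ?_⟩⟩
  obtain ⟨x, hx⟩ := (ne_univ_iff_exists_notMem _).1 hI.ne_univ
  obtain ⟨F, hF⟩ := exists_forall_not_eventually_lt e hQ hx
  obtain ⟨α, hα⟩ := h F
  exact hF α hα

end LadderK

/-- if `(K, ⊴_ρ)` is a 3-ladder, then it is a maximal 3-ladder
iff `{ρ(0,α) : 0 < α < ω₁}` is a dominating family. -/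
theorem K_maximal_iff_dominating (ρ : Omega1 → Omega1 → ℕ → ℕ)
    (hdiag : ∀ α : Omega1, ∀ n : ℕ, ρ α α n = 0)
    (hladder : RelIsNLadder (KRel ρ) 3) :
    RelIsMaximalNLadder (KRel ρ) 3 ↔
      IsDominating {g : ℕ → ℕ | ∃ α : Omega1, omega1Zero < α ∧ g = ρ omega1Zero α} := by
  have := Fact.mk hladder
  rw [hladder.relIsMaximalNLadder_iff]
  constructor
  · intro hmax f
    obtain ⟨α, hα, hlt⟩ := LadderK.exists_eventually_lt_of_isMaximalNLadder hmax f
    exact ⟨_, ⟨α, hα, rfl⟩, hlt⟩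
  · intro hdom
    refine LadderK.isMaximalNLadder_of_forall_exists_eventually_lt fun f => ?_
    obtain ⟨_, ⟨α, -, rfl⟩, hlt⟩ := hdom f
    exact ⟨α, hlt⟩
end

section
/- If 𝔡 = ℵ1, i.e., there exists a dominating family of functions ω → ω of cardinality ℵ1, then there exists a map ρ as above such that (K, ⊴_ρ) is a maximal 3-ladder. -/
/-!
Take `ρ(α, γ) = max (e γ α) (g γ)` for `α < γ`, where `g` is a `≤*`-increasing dominating sequence
of monotone functions and `e` is a coherent sequence of finite-to-one functions
`e γ : {α | α < γ} → ω`, chosen so large that `g β ≤ max (g γ) (e γ β)` holds everywhere. Coherence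
makes `(K, ⊴_ρ)` a lattice, finite-to-one makes it lower finite, and a lower cover of a point drops
essentially one of its three coordinates, so `K` is a `3`-ladder.

Suppose `K` were a proper ideal of a `3`-ladder `Q`, and let `q ∈ Q` lie outside it. Among any four
elements of a `3`-ladder one lies below every common upper bound of the other three; with `q` as
one of the four, and because `K` is an ideal, it is never `q`. Since `ω₁` is uncountable, this gives
an `α` and a function `d` with `(α, n, 0) ≤ q ⊔ (α, 0, d n)` for all `n`. Choosing `γ` large with
`ρ(α, γ)` eventually above `n ↦ d (n + 1)`, we get a single `m` such that
`(α, n, 0) ≤ q ⊔ (γ, 0, m)` for almost all `n`, by induction on `n`. So infinitely many elements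
lie below `q ⊔ (γ, 0, m)`, which contradicts lower finiteness.
-/

/-! ### Lower covers, joins and meets of a relation -/

section Relations

variable {X : Type*} {r : X → X → Prop}

/-- `z` is the join of `x` and `y` with respect to `r`, in the form in which `RelIsNLadder` asks
for it. -/
def RelIsSup (r : X → X → Prop) (x y z : X) : Prop :=
  r x z ∧ r y z ∧ ∀ w, r x w → r y w → r z w

theorem RelIsSup.symm {x y z : X} (h : RelIsSup r x y z) : RelIsSup r y x z :=
  ⟨h.2.1, h.1, fun w hyw hxw => h.2.2 w hxw hyw⟩

theorem RelCovBy.eq_of_rel {z w x : X} (hz : RelCovBy r z x) (hzw : r z w) (hwx : RelLt r w x) :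
    z = w :=
  by_contra fun hne => hz.2 w ⟨⟨hzw, hne⟩, hwx⟩

theorem ncard_relCovBy_le_card {ι : Type*} [Finite ι] {x : X} (color : X → ι)
    (hcolor : ∀ z w, RelLt r z x → RelLt r w x → color z = color w →
      ∃ u, r z u ∧ r w u ∧ RelLt r u x) :
    {z | RelCovBy r z x}.ncard ≤ Nat.card ι := by
  have color_injOn : Set.InjOn color {z | RelCovBy r z x} := by
    intro z hz w hw hzw
    obtain ⟨u, hzu, hwu, hux⟩ := hcolor z w hz.1 hw.1 hzw
    exact (hz.eq_of_rel hzu hux).trans (hw.eq_of_rel hwu hux).symm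
  simpa only [Set.ncard_univ] using
    Set.ncard_le_ncard_of_injOn color (fun _ _ => Set.mem_univ _) color_injOn

theorem exists_relInf_of_finite [IsTrans X r] (hsup : ∀ x y, ∃ z, RelIsSup r x y z) {bot : X}
    (hbot : ∀ x, r bot x) {x : X} (hfin : {w | r w x}.Finite) (y : X) :
    ∃ z, r z x ∧ r z y ∧ ∀ w, r w x → r w y → r w z := by
  let L : Set X := {w | r w x ∧ r w y}
  have : Finite L := hfin.subset fun w hw => hw.1
  have : Nonempty L := ⟨⟨bot, hbot x, hbot y⟩⟩
  have L_directed : Directed r ((↑) : L → X) := by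
    rintro ⟨a, hax, hay⟩ ⟨b, hbx, hby⟩
    obtain ⟨z, haz, hbz, hz⟩ := hsup a b
    exact ⟨⟨z, hz x hax hbx, hz y hay hby⟩, haz, hbz⟩
  obtain ⟨⟨z, hzx, hzy⟩, hz⟩ := L_directed.finite_le (id : L → L)
  exact ⟨z, hzx, hzy, fun w hwx hwy => hz ⟨w, hwx, hwy⟩⟩

theorem RelIsSup.coe_eq_sup {Q : Type*} [Lattice Q] {I : Order.Ideal Q} {e : X ≃ I}
    (he : ∀ x y, r x y ↔ e x ≤ e y) {x y z : X} (h : RelIsSup r x y z) :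
    (e z : Q) = (e x : Q) ⊔ e y := by
  apply le_antisymm
  · obtain ⟨w, hw⟩ := e.surjective ⟨(e x : Q) ⊔ e y, Order.Ideal.sup_mem (e x).2 (e y).2⟩
    have coe_w : (e w : Q) = (e x : Q) ⊔ e y := congrArg Subtype.val hw
    have hxw : r x w := (he x w).2 (show (e x : Q) ≤ e w from coe_w ▸ le_sup_left)
    have hyw : r y w := (he y w).2 (show (e y : Q) ≤ e w from coe_w ▸ le_sup_right)
    exact coe_w ▸ (he z w).1 (h.2.2 w hxw hyw)
  · exact sup_le ((he x z).1 h.1) ((he y z).1 h.2.1)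

end Relations

/-! ### Breadth of ladders -/

namespace IsNLadder

variable {Q : Type*} [Lattice Q] {n : ℕ} {ι : Type*} [Finite ι]

theorem exists_le_covBy_of_lt (hQ : IsNLadder Q n) {x y : Q} (hxy : x < y) :
    ∃ c, x ≤ c ∧ c ⋖ y := by
  let : LocallyFiniteOrder Q :=
    .ofFiniteIcc fun _ b => (hQ.2.1 b).subset Set.Icc_subset_Iic_self
  exact _root_.exists_le_covBy_of_lt hxy

-- Otherwise each `a i` is missed by some lower cover of the join of the family which lies above
-- all the other `a j`, and these lower covers are pairwise distinct.
theorem exists_forall_le_of_lt_card (hQ : IsNLadder Q n) (hn : n < Nat.card ι) (a : ι → Q) :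
    ∃ i, ∀ z, (∀ j ≠ i, a j ≤ z) → a i ≤ z := by
  by_contra! hcon
  choose z hz hzi using hcon
  have := Fintype.ofFinite ι
  have : Nonempty ι := (Nat.card_pos_iff.1 (n.zero_le.trans_lt hn)).1
  let y := Finset.univ.sup' Finset.univ_nonempty a
  have le_y (i : ι) : a i ≤ y := Finset.le_sup' a (Finset.mem_univ i)
  have inf_lt (i : ι) : z i ⊓ y < y :=
    inf_le_right.lt_of_ne fun h => hzi i ((le_y i).trans (inf_eq_right.1 h))
  choose c hc hcy using fun i => hQ.exists_le_covBy_of_lt (inf_lt i)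
  have le_c {i j : ι} (hji : j ≠ i) : a j ≤ c i := (le_inf (hz i j hji) (le_y j)).trans (hc i)
  have not_le_c (i : ι) : ¬ a i ≤ c i := fun hi =>
    (hcy i).lt.not_ge <| Finset.sup'_le _ _ fun j _ => by
      rcases eq_or_ne j i with rfl | hji
      exacts [hi, le_c hji]
  have c_injective : Function.Injective c := fun i j hij =>
    by_contra fun hne => not_le_c i (hij ▸ le_c hne)
  refine hn.not_ge ?_
  calc Nat.card ι = (Set.range c).ncard := (Set.ncard_range_of_injective c_injective).symm
    _ ≤ {x | x ⋖ y}.ncard := Set.ncard_le_ncard (Set.range_subset_iff.2 hcy)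
        ((hQ.2.1 y).subset fun _ hx => hx.le)
    _ ≤ n := hQ.2.2 y

theorem exists_forall_le_of_notMem_ideal (hQ : IsNLadder Q n) (hn : n ≤ Nat.card ι)
    {I : Order.Ideal Q} {q : Q} (hq : q ∉ I) {a : ι → Q} (ha : ∀ i, a i ∈ I) :
    ∃ i, ∀ z, q ≤ z → (∀ j ≠ i, a j ≤ z) → a i ≤ z := by
  have hcard : n < Nat.card (Option ι) := by rw [Finite.card_option]; omega
  obtain ⟨_ | i, hi⟩ := hQ.exists_forall_le_of_lt_card hcard fun o => o.elim q a
  · obtain ⟨b, hbI, hb⟩ : ∃ b ∈ I, ∀ i, a i ≤ b := by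
      have := I.nonempty.to_subtype
      obtain ⟨b, hb⟩ := I.directed.directed_val.finite_le fun i => (⟨a i, ha i⟩ : I)
      exact ⟨b, b.2, hb⟩
    refine absurd (I.lower (hi b ?_) hbI) hq
    rintro (_ | j) hj
    exacts [absurd rfl hj, hb j]
  · refine ⟨i, fun z hqz hz => hi z ?_⟩
    rintro (_ | j) hj
    exacts [hqz, hz j fun h => hj (congrArg some h)]

theorem le_sup_or_le_sup_or_le_sup (hQ : IsNLadder Q 3) {I : Order.Ideal Q} {q : Q} (hq : q ∉ I)
    {a b c : Q} (ha : a ∈ I) (hb : b ∈ I) (hc : c ∈ I) :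
    a ≤ q ⊔ (b ⊔ c) ∨ b ≤ q ⊔ (a ⊔ c) ∨ c ≤ q ⊔ (a ⊔ b) := by
  obtain ⟨i, hi⟩ := hQ.exists_forall_le_of_notMem_ideal (a := ![a, b, c]) (by simp) hq
    (by simp [Fin.forall_fin_succ, ha, hb, hc])
  fin_cases i
  · refine .inl (hi _ le_sup_left ?_)
    simp [Fin.forall_fin_succ, le_sup_of_le_right]
  · refine .inr (.inl (hi _ le_sup_left ?_))
    simp [Fin.forall_fin_succ, le_sup_of_le_right]
  · refine .inr (.inr (hi _ le_sup_left ?_))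
    simp [Fin.forall_fin_succ, le_sup_of_le_right]

end IsNLadder

/-! ### Ladder maps and the lattice `K` -/

/-- The conditions on `ρ` under which `⊴_ρ` makes `Ω × ω × ω`, with a least element added, a
lower finite lattice. -/
structure IsLadderMap {Ω : Type*} [LinearOrder Ω] (ρ : Ω → Ω → ℕ → ℕ) : Prop where
  self_eq_zero (α : Ω) (n : ℕ) : ρ α α n = 0
  monotone (α β : Ω) : Monotone (ρ α β)
  le_max_of_le_of_le {α β γ : Ω} (hαβ : α ≤ β) (hβγ : β ≤ γ) (n : ℕ) :
    ρ α γ n ≤ max (ρ α β n) (ρ β γ n)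
  lower_le_max {α β γ : Ω} (hαβ : α ≤ β) (hβγ : β ≤ γ) (n : ℕ) :
    ρ α β n ≤ max (ρ α γ n) (ρ β γ 0)
  upper_le_max {α β γ : Ω} (hαβ : α ≤ β) (hβγ : β ≤ γ) (n : ℕ) :
    ρ β γ n ≤ max (ρ α γ n) (ρ β γ 0)
  finite_le (β : Ω) (m : ℕ) : {α | α ≤ β ∧ ρ α β 0 ≤ m}.Finite

theorem KRel_some_some {ρ : Omega1 → Omega1 → ℕ → ℕ} {α β : Omega1} {n m n' m' : ℕ} :
    KRel ρ (some (α, n, m)) (some (β, n', m')) ↔ α ≤ β ∧ n ≤ n' ∧ m ≤ m' ∧ ρ α β n ≤ m' :=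
  Iff.rfl

namespace IsLadderMap

variable {ρ : Omega1 → Omega1 → ℕ → ℕ}

theorem isPartialOrder_KRel (hρ : IsLadderMap ρ) : IsPartialOrder KType (KRel ρ) where
  refl := by
    rintro (_ | ⟨α, n, m⟩)
    · trivial
    · simp [KRel_some_some, hρ.self_eq_zero]
  trans := by
    rintro (_ | ⟨α, n, m⟩) (_ | ⟨β, n', m'⟩) (_ | ⟨γ, n'', m''⟩) hxy hyz
    all_goals try trivial
    obtain ⟨hαβ, hn, hm, hρm⟩ := hxy
    obtain ⟨hβγ, hn', hm', hρm'⟩ := hyz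
    refine ⟨hαβ.trans hβγ, hn.trans hn', hm.trans hm', ?_⟩
    calc ρ α γ n ≤ max (ρ α β n) (ρ β γ n) := hρ.le_max_of_le_of_le hαβ hβγ n
      _ ≤ max (ρ α β n) (ρ β γ n') := max_le_max_left _ (hρ.monotone β γ hn)
      _ ≤ m'' := max_le (hρm.trans hm') hρm'
  antisymm := by
    rintro (_ | ⟨α, n, m⟩) (_ | ⟨β, n', m'⟩) hxy hyx
    all_goals try trivial
    obtain ⟨hαβ, hn, hm, -⟩ := hxy
    obtain ⟨hβα, hn', hm', -⟩ := hyx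
    rw [hαβ.antisymm hβα, hn.antisymm hn', hm.antisymm hm']

theorem relIsSup_of_le (hρ : IsLadderMap ρ) {α β : Omega1} (hαβ : α ≤ β) (n m n' m' : ℕ) :
    RelIsSup (KRel ρ) (some (α, n, m)) (some (β, n', m'))
      (some (β, max n n', max (max m m') (ρ α β n))) := by
  refine ⟨⟨hαβ, by simp⟩, ⟨le_rfl, by simp [hρ.self_eq_zero]⟩, ?_⟩
  rintro (_ | ⟨γ, k, l⟩) hx hy
  · exact hx
  obtain ⟨-, hnk, hml, hαγ⟩ := hx
  obtain ⟨hβγ, hn'k, hm'l, hβγl⟩ := hy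
  have ρ_zero_le : ρ β γ 0 ≤ l := (hρ.monotone β γ n'.zero_le).trans hβγl
  have ρ_αβ_le : ρ α β n ≤ l := (hρ.lower_le_max hαβ hβγ n).trans (max_le hαγ ρ_zero_le)
  have ρ_βγ_le : ρ β γ n ≤ l := (hρ.upper_le_max hαβ hβγ n).trans (max_le hαγ ρ_zero_le)
  refine ⟨hβγ, max_le hnk hn'k, max_le (max_le hml hm'l) ρ_αβ_le, ?_⟩
  rw [(hρ.monotone β γ).map_max]
  exact max_le ρ_βγ_le hβγl

theorem exists_relIsSup (hρ : IsLadderMap ρ) (x y : KType) : ∃ z, RelIsSup (KRel ρ) x y z := by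
  have := hρ.isPartialOrder_KRel
  rcases x with _ | ⟨α, n, m⟩
  · exact ⟨y, trivial, refl_of _ y, fun _ _ hy => hy⟩
  rcases y with _ | ⟨β, n', m'⟩
  · exact ⟨_, refl_of _ _, trivial, fun _ hx _ => hx⟩
  rcases le_total α β with hαβ | hβα
  · exact ⟨_, hρ.relIsSup_of_le hαβ n m n' m'⟩
  · exact ⟨_, (hρ.relIsSup_of_le hβα n' m' n m).symm⟩

theorem finite_KRel (hρ : IsLadderMap ρ) (x : KType) : {y | KRel ρ y x}.Finite := by
  rcases x with _ | ⟨γ, n, m⟩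
  · refine (Set.finite_singleton none).subset ?_
    rintro (_ | _) hy
    exacts [rfl, hy.elim]
  · refine ((((hρ.finite_le γ m).prod ((Set.finite_Iic n).prod (Set.finite_Iic m))).image
      some).insert none).subset ?_
    rintro (_ | ⟨α, k, l⟩) hy
    · exact Set.mem_insert _ _
    · obtain ⟨hαγ, hkn, hlm, hρm⟩ := hy
      exact .inr ⟨(α, k, l), ⟨⟨hαγ, (hρ.monotone α γ k.zero_le).trans hρm⟩, hkn, hlm⟩, rfl⟩

/-- Sorts the elements `z` strictly below `(γ, n, m)` by the first coordinate in which they are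
strictly smaller, in the order second, first, third; `none` gets an arbitrary color. -/
noncomputable def coverColor (γ : Omega1) (n : ℕ) : KType → Fin 3
  | none => 0
  | some (α, k, _) => if k < n then 0 else if α < γ then 1 else 2

theorem sup_ne_of_coverColor_eq (hρ : IsLadderMap ρ) {α β γ : Omega1} {k l k' l' n m : ℕ}
    (hz : RelLt (KRel ρ) (some (α, k, l)) (some (γ, n, m)))
    (hw : RelLt (KRel ρ) (some (β, k', l')) (some (γ, n, m)))
    (hcolor : coverColor γ n (some (α, k, l)) = coverColor γ n (some (β, k', l'))) :
    (some (β, max k k', max (max l l') (ρ α β k)) : KType) ≠ some (γ, n, m) := by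
  obtain ⟨⟨hαγ, hk, -, -⟩, hz_ne⟩ := hz
  obtain ⟨⟨-, hk', -, -⟩, hw_ne⟩ := hw
  simp only [ne_eq, Option.some.injEq, Prod.mk.injEq, not_and] at hz_ne hw_ne ⊢
  rintro rfl hmax
  rcases hαγ.lt_or_eq with hαβ | rfl
  · simp only [coverColor, hαβ, lt_irrefl, if_true, if_false] at hcolor
    split_ifs at hcolor <;> omega
  · simp only [coverColor, lt_irrefl, if_false] at hcolor
    have hkn : k = n ∧ k' = n := by split_ifs at hcolor <;> omega
    have := hz_ne rfl hkn.1
    have := hw_ne rfl hkn.2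
    rw [hρ.self_eq_zero]
    omega

theorem exists_relLt_of_coverColor_eq (hρ : IsLadderMap ρ) {γ : Omega1} {n m : ℕ} {z w : KType}
    (hz : RelLt (KRel ρ) z (some (γ, n, m))) (hw : RelLt (KRel ρ) w (some (γ, n, m)))
    (hcolor : coverColor γ n z = coverColor γ n w) :
    ∃ u, KRel ρ z u ∧ KRel ρ w u ∧ RelLt (KRel ρ) u (some (γ, n, m)) := by
  have := hρ.isPartialOrder_KRel
  rcases z with _ | ⟨α, k, l⟩
  · exact ⟨w, trivial, refl_of _ w, hw⟩
  rcases w with _ | ⟨β, k', l'⟩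
  · exact ⟨_, refl_of _ _, trivial, hz⟩
  rcases le_total α β with hαβ | hβα
  · obtain ⟨hzu, hwu, hu⟩ := hρ.relIsSup_of_le hαβ k l k' l'
    exact ⟨_, hzu, hwu, hu _ hz.1 hw.1, hρ.sup_ne_of_coverColor_eq hz hw hcolor⟩
  · obtain ⟨hwu, hzu, hu⟩ := hρ.relIsSup_of_le hβα k' l' k l
    exact ⟨_, hzu, hwu, hu _ hw.1 hz.1, hρ.sup_ne_of_coverColor_eq hw hz hcolor.symm⟩

theorem ncard_relCovBy_le_three (hρ : IsLadderMap ρ) (x : KType) :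
    {z | RelCovBy (KRel ρ) z x}.ncard ≤ 3 := by
  rcases x with _ | ⟨γ, n, m⟩
  · have no_cover : {z | RelCovBy (KRel ρ) z none} = ∅ := by
      refine Set.eq_empty_of_forall_notMem ?_
      rintro (_ | _) hz
      exacts [hz.1.2 rfl, hz.1.1]
    simp [no_cover]
  · simpa using ncard_relCovBy_le_card (coverColor γ n) fun _ _ hz hw hcolor =>
      hρ.exists_relLt_of_coverColor_eq hz hw hcolor

theorem relIsNLadder_KRel (hρ : IsLadderMap ρ) : RelIsNLadder (KRel ρ) 3 :=
  have := hρ.isPartialOrder_KRel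
  ⟨this, hρ.exists_relIsSup,
    fun x => exists_relInf_of_finite hρ.exists_relIsSup (bot := none) (fun _ => trivial)
      (hρ.finite_KRel x),
    hρ.finite_KRel, hρ.ncard_relCovBy_le_three⟩

end IsLadderMap

/-! ### Points outside a copy of `K` -/

theorem exists_forall_lt_of_countable {Ω : Type*} [LinearOrder Ω] [Uncountable Ω]
    [∀ γ : Ω, Countable (Set.Iio γ)] {S : Set Ω} (hS : S.Countable) : ∃ δ, ∀ s ∈ S, s < δ := by
  by_contra! hcon
  have Iic_countable (s : Ω) : (Set.Iic s).Countable :=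
    Set.Iio_insert (a := s) ▸ (Set.to_countable (Set.Iio s)).insert s
  refine Set.not_countable_univ ((hS.biUnion fun s _ => Iic_countable s).mono fun δ _ => ?_)
  obtain ⟨s, hs, hδs⟩ := hcon δ
  exact Set.mem_biUnion hs hδs

/-- Above every index, and in every row `α`, the functions `ρ α γ` form a dominating family. -/
def IsCofinallyDominating {Ω : Type*} [LT Ω] (ρ : Ω → Ω → ℕ → ℕ) : Prop :=
  ∀ (α δ : Ω) (f : ℕ → ℕ), ∃ γ > δ, f ≤ᶠ[Filter.atTop] ρ α γ

/-- What is left of a `3`-ladder `Q` that contains `K` as a proper ideal: `x` is the embedding of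
`K` without its least element, and `q` is a point of `Q` outside the image of `K`, which enters
only through `le_sup_or`. -/
structure IsOuterPoint {Ω Q : Type*} [LinearOrder Ω] [Lattice Q] (ρ : Ω → Ω → ℕ → ℕ)
    (x : Ω × ℕ × ℕ → Q) (q : Q) : Prop where
  finite_Iic (y : Q) : (Set.Iic y).Finite
  le_iff {α β : Ω} {n m n' m' : ℕ} :
    x (α, n, m) ≤ x (β, n', m') ↔ α ≤ β ∧ n ≤ n' ∧ m ≤ m' ∧ ρ α β n ≤ m'
  sup_eq {α β : Ω} (hαβ : α ≤ β) (n m n' m' : ℕ) :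
    x (α, n, m) ⊔ x (β, n', m') = x (β, max n n', max (max m m') (ρ α β n))
  le_sup_or (a b c : Ω × ℕ × ℕ) :
    x a ≤ q ⊔ (x b ⊔ x c) ∨ x b ≤ q ⊔ (x a ⊔ x c) ∨ x c ≤ q ⊔ (x a ⊔ x b)

namespace IsOuterPoint

variable {Ω Q : Type*} [LinearOrder Ω] [Lattice Q] {ρ : Ω → Ω → ℕ → ℕ} {x : Ω × ℕ × ℕ → Q} {q : Q}

theorem injective (h : IsOuterPoint ρ x q) : Function.Injective x := by
  rintro ⟨α, n, m⟩ ⟨β, n', m'⟩ heq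
  obtain ⟨hαβ, hn, hm, -⟩ := h.le_iff.1 heq.le
  obtain ⟨hβα, hn', hm', -⟩ := h.le_iff.1 heq.ge
  rw [hαβ.antisymm hβα, hn.antisymm hn', hm.antisymm hm']

theorem finite_setOf_le {ι : Type*} (h : IsOuterPoint ρ x q) {p : ι → Ω × ℕ × ℕ}
    (hp : Function.Injective p) (y : Q) : {i | x (p i) ≤ y}.Finite :=
  (h.finite_Iic y).preimage (h.injective.comp hp).injOn

theorem sup_row_eq (h : IsOuterPoint ρ x q) {α γ : Ω} (hαγ : α ≤ γ) (n : ℕ) :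
    x (α, n, 0) ⊔ x (γ, 0, 0) = x (γ, n, ρ α γ n) := by
  simpa using h.sup_eq hαγ n 0 0 0

-- Apply `le_sup_or` to `(α, n, 0)`, `(α, 0, m)` and `(γ, 0, 0)`: for large `m` the second
-- alternative fails by lower finiteness.
theorem exists_le_sup (h : IsOuterPoint ρ x q) (hρ : IsLadderMap ρ) {α γ : Ω} (hαγ : α ≤ γ) {n : ℕ}
    (hγ : ∀ m, ¬ x (γ, 0, 0) ≤ q ⊔ x (α, n, m)) : ∃ m, x (α, n, 0) ≤ q ⊔ x (γ, 0, m) := by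
  have hfin : {m | x (α, 0, m) ≤ q ⊔ x (γ, n, ρ α γ n)}.Finite :=
    h.finite_setOf_le (p := fun m => (α, 0, m)) (fun _ _ heq => by simpa using heq) _
  obtain ⟨m, hm⟩ := (hfin.union (Set.finite_Iio (ρ α γ 0))).exists_notMem
  obtain ⟨hm_not_le, hm_large⟩ : ¬ x (α, 0, m) ≤ q ⊔ x (γ, n, ρ α γ n) ∧ ρ α γ 0 ≤ m := by
    simpa using hm
  have sup_αγ : x (α, 0, m) ⊔ x (γ, 0, 0) = x (γ, 0, m) := by
    simpa [hm_large] using h.sup_eq hαγ 0 m 0 0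
  have sup_αα : x (α, n, 0) ⊔ x (α, 0, m) = x (α, n, m) := by
    simpa [hρ.self_eq_zero] using h.sup_eq (le_refl α) n 0 0 m
  have := h.le_sup_or (α, n, 0) (α, 0, m) (γ, 0, 0)
  rw [sup_αγ, sup_αα, h.sup_row_eq hαγ] at this
  exact ⟨m, this.resolve_right (not_or.2 ⟨hm_not_le, hγ m⟩)⟩

theorem row_le_sup (h : IsOuterPoint ρ x q) (hρ : IsLadderMap ρ) {α γ : Ω} (hαγ : α ≤ γ) {n m : ℕ}
    (hle : x (α, n, 0) ≤ q ⊔ x (γ, 0, m)) : x (γ, n, ρ α γ n) ≤ q ⊔ x (γ, 0, m) := by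
  rw [← h.sup_row_eq hαγ]
  exact sup_le hle (le_sup_of_le_right (h.le_iff.2 (by simp [hρ.self_eq_zero])))

variable [Uncountable Ω] [∀ γ : Ω, Countable (Set.Iio γ)]

theorem exists_gt_forall_not_le (h : IsOuterPoint ρ x q) (α : Ω) :
    ∃ δ > α, ∀ γ ≥ δ, ∀ n m, ¬ x (γ, 0, 0) ≤ q ⊔ x (α, n, m) := by
  have hcount : (insert α (⋃ p : ℕ × ℕ, {γ | x (γ, 0, 0) ≤ q ⊔ x (α, p)})).Countable :=
    (Set.countable_iUnion fun p => (h.finite_setOf_le (p := fun γ => (γ, 0, 0))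
      (fun _ _ heq => by simpa using heq) _).countable).insert α
  obtain ⟨δ, hδ⟩ := exists_forall_lt_of_countable hcount
  refine ⟨δ, hδ α (Set.mem_insert _ _), fun γ hγ n m hle => hγ.not_gt (hδ γ (.inr ?_))⟩
  exact Set.mem_iUnion.2 ⟨(n, m), hle⟩

theorem exists_forall_exists_le_sup_self (h : IsOuterPoint ρ x q) (hρ : IsLadderMap ρ) :
    ∃ α, ∀ n, ∃ m, x (α, n, 0) ≤ q ⊔ x (α, 0, m) := by
  obtain ⟨β⟩ : Nonempty Ω := inferInstance
  obtain ⟨α, hβα, hα⟩ := h.exists_gt_forall_not_le β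
  refine ⟨α, fun n => ?_⟩
  obtain ⟨m, hm⟩ := h.exists_le_sup hρ hβα.le (hα α le_rfl n)
  exact ⟨m, (h.le_iff.2 (by simp [hρ.self_eq_zero])).trans (h.row_le_sup hρ hβα.le hm)⟩

-- If `(α, n, 0) ≤ q ⊔ (γ, 0, m)` then `(γ, n, ρ α γ n) ≤ q ⊔ (γ, 0, m)`, and as soon as
-- `ρ α γ n` exceeds `d (n + 1)` this yields `(α, n + 1, 0) ≤ q ⊔ (γ, 0, m)`: contradicting lower
-- finiteness.
theorem not_isCofinallyDominating (h : IsOuterPoint ρ x q) (hρ : IsLadderMap ρ) :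
    ¬ IsCofinallyDominating ρ := by
  intro hdom
  obtain ⟨α, hα⟩ := h.exists_forall_exists_le_sup_self hρ
  choose d hd using hα
  obtain ⟨δ, hαδ, hδ⟩ := h.exists_gt_forall_not_le α
  obtain ⟨γ, hδγ, hdγ⟩ := hdom α δ fun n => d (n + 1)
  obtain ⟨N, hN⟩ := Filter.eventually_atTop.1 hdγ
  have hαγ : α ≤ γ := (hαδ.trans hδγ).le
  obtain ⟨m, hm⟩ := h.exists_le_sup hρ hαγ (hδ γ hδγ.le N)
  have hfin : {n | x (α, n, 0) ≤ q ⊔ x (γ, 0, m)}.Finite :=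
    h.finite_setOf_le (p := fun n => (α, n, 0)) (fun _ _ heq => by simpa using heq) _
  have step : ∀ n ≥ N, x (α, n, 0) ≤ q ⊔ x (γ, 0, m) → x (α, n + 1, 0) ≤ q ⊔ x (γ, 0, m) := by
    intro n hn hle
    have d_le_row : x (α, 0, d (n + 1)) ≤ x (γ, n, ρ α γ n) :=
      h.le_iff.2 ⟨hαγ, n.zero_le, hN n hn, hρ.monotone α γ n.zero_le⟩
    calc x (α, n + 1, 0) ≤ q ⊔ x (α, 0, d (n + 1)) := hd (n + 1)
      _ ≤ q ⊔ x (γ, 0, m) := sup_le le_sup_left (d_le_row.trans (h.row_le_sup hρ hαγ hle))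
  exact Set.infinite_of_forall_exists_gt (fun k => ⟨max N (k + 1),
    Nat.le_induction hm step _ (le_max_left _ _), (le_max_right _ _).trans_lt' k.lt_succ_self⟩) hfin

end IsOuterPoint

/-! ### Eventual domination -/

section EventualDomination

open Filter

theorem exists_monotone_forall_eventuallyLE {ι : Type*} [Countable ι] [Nonempty ι]
    (f : ι → ℕ → ℕ) : ∃ g : ℕ → ℕ, Monotone g ∧ ∀ i, f i ≤ᶠ[atTop] g := by
  obtain ⟨s, hs⟩ := exists_surjective_nat ι
  let diag : ℕ → ℕ := fun n => (Finset.range (n + 1)).sup fun i => f (s i) n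
  refine ⟨partialSups diag, (partialSups diag).monotone, hs.forall.2 fun i => ?_⟩
  filter_upwards [eventually_ge_atTop i] with n hin
  have le_diag : f (s i) n ≤ diag n :=
    Finset.le_sup (f := fun i => f (s i) n) (Finset.mem_range_succ_iff.2 hin)
  exact le_diag.trans (le_partialSups diag n)

/-- The least `m` such that `f ≤ max g m` pointwise. It is meaningful only when `f` is eventually
below `g`; otherwise it is the junk value `0`. -/
noncomputable def dominationGap (f g : ℕ → ℕ) : ℕ := sInf {m | ∀ n, f n ≤ max (g n) m}

theorem le_max_dominationGap {f g : ℕ → ℕ} (hfg : f ≤ᶠ[atTop] g) (n : ℕ) :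
    f n ≤ max (g n) (dominationGap f g) := by
  obtain ⟨N, hN⟩ := eventually_atTop.1 hfg
  have hmem : (Finset.range N).sup f ∈ {m | ∀ n, f n ≤ max (g n) m} := by
    intro k
    rcases lt_or_ge k N with hk | hk
    · exact le_max_of_le_right (Finset.le_sup (Finset.mem_range.2 hk))
    · exact le_max_of_le_left (hN k hk)
  exact Nat.sInf_mem ⟨_, hmem⟩ n

theorem dominationGap_le_max {f g k : ℕ → ℕ} (hfg : f ≤ᶠ[atTop] g) (hgk : g ≤ᶠ[atTop] k) :
    dominationGap f k ≤ max (dominationGap f g) (dominationGap g k) := by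
  refine Nat.sInf_le fun n => ?_
  have := le_max_dominationGap hfg n
  have := le_max_dominationGap hgk n
  omega

end EventualDomination

/-! ### Recursive constructions along a well-order -/

section Recursion

open Filter Function

variable {Ω : Type*} [LinearOrder Ω] [WellFoundedLT Ω]

theorem exists_forall_of_exists_update {A : Type*} [Nonempty A] {P : (Ω → A) → Ω → Prop}
    (P_congr : ∀ ⦃G G' γ⦄, Set.EqOn G G' (Set.Iic γ) → P G γ → P G' γ)
    (exists_update : ∀ G γ, (∀ β < γ, P G β) → ∃ a, P (update G γ a) γ) :
    ∃ G, ∀ γ, P G γ := by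
  classical
  let extend (γ : Ω) (G : ∀ β < γ, A) (β : Ω) : A :=
    if hβ : β < γ then G β hβ else Classical.arbitrary A
  let G : Ω → A := wellFounded_lt.fix fun γ G => Classical.epsilon fun a =>
    P (update (extend γ G) γ a) γ
  have G_eq (γ : Ω) :
      G γ = Classical.epsilon fun a => P (update (extend γ fun β _ => G β) γ a) γ :=
    wellFounded_lt.fix_eq _ γ
  refine ⟨G, fun γ => ?_⟩
  induction γ using WellFoundedLT.induction with
  | ind γ ih =>
    have extend_eq {β : Ω} (hβ : β < γ) : extend γ (fun β _ => G β) β = G β := dif_pos hβ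
    have hspec : P (update (extend γ fun β _ => G β) γ (G γ)) γ := by
      rw [G_eq]
      refine Classical.epsilon_spec (exists_update _ γ fun β hβ => ?_)
      exact P_congr (fun δ hδ => (extend_eq (lt_of_le_of_lt hδ hβ)).symm) (ih β hβ)
    refine P_congr (fun β hβ => ?_) hspec
    rcases (Set.mem_Iic.1 hβ).lt_or_eq with hβγ | rfl
    · rw [update_of_ne hβγ.ne, extend_eq hβγ]
    · rw [update_self]

variable [∀ γ : Ω, Countable (Set.Iio γ)]

theorem exists_monotone_eventuallyLE_chain (d : Ω → ℕ → ℕ) :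
    ∃ g : Ω → ℕ → ℕ, (∀ γ, Monotone (g γ)) ∧ (∀ γ, d γ ≤ᶠ[atTop] g γ) ∧
      ∀ β γ, β ≤ γ → g β ≤ᶠ[atTop] g γ := by
  let P (g : Ω → ℕ → ℕ) (γ : Ω) : Prop :=
    Monotone (g γ) ∧ d γ ≤ᶠ[atTop] g γ ∧ ∀ β < γ, g β ≤ᶠ[atTop] g γ
  have P_congr : ∀ ⦃g g' γ⦄, Set.EqOn g g' (Set.Iic γ) → P g γ → P g' γ := by
    rintro g g' γ hgg' ⟨hmono, hd, hlt⟩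
    simp only [P, ← hgg' Set.self_mem_Iic]
    exact ⟨hmono, hd, fun β hβ => hgg' hβ.le ▸ hlt β hβ⟩
  have exists_update (g : Ω → ℕ → ℕ) (γ : Ω) (_ : ∀ β < γ, P g β) : ∃ a, P (update g γ a) γ := by
    obtain ⟨a, ha_mono, ha⟩ :=
      exists_monotone_forall_eventuallyLE fun o : Option (Set.Iio γ) => o.elim (d γ) fun β => g β
    refine ⟨a, ?_⟩
    simp only [P, update_self]
    exact ⟨ha_mono, ha none, fun β hβ => by simpa [hβ.ne] using ha (some ⟨β, hβ⟩)⟩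
  obtain ⟨g, hg⟩ := exists_forall_of_exists_update P_congr exists_update
  refine ⟨g, fun γ => (hg γ).1, fun γ => (hg γ).2.1, fun β γ hβγ => ?_⟩
  rcases hβγ.lt_or_eq with hβγ | rfl
  exacts [(hg γ).2.2 β hβγ, .rfl]

end Recursion

/-! ### Coherent sequences of finite-to-one functions -/

theorem exists_monotone_cofinal_seq {Ω : Type*} [LinearOrder Ω] {γ : Ω} [Countable (Set.Iio γ)]
    (hγ : ¬ IsMin γ) :
    ∃ c : ℕ → Ω, Monotone c ∧ (∀ i, c i < γ) ∧ ∀ α < γ, ∃ i, α ≤ c i := by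
  obtain ⟨β, hβγ⟩ := not_isMin_iff.1 hγ
  have : Nonempty (Set.Iio γ) := ⟨⟨β, hβγ⟩⟩
  obtain ⟨c, hc_mono, hc⟩ := Filter.exists_seq_monotone_tendsto_atTop_atTop (Set.Iio γ)
  exact ⟨fun i => c i, hc_mono, fun i => (c i).2, fun α hα =>
    (Filter.tendsto_atTop.1 hc ⟨α, hα⟩).exists⟩

theorem exists_monotone_forall_le (w : ℕ → ℕ → ℕ) :
    ∃ k : ℕ → ℕ, Monotone k ∧ (∀ i, i ≤ k i) ∧ ∀ i, ∀ l ≤ i, w i l ≤ k i := by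
  let rowSup : ℕ → ℕ := fun i => (Finset.range (i + 1)).sup (w i)
  refine ⟨fun i => i + partialSups rowSup i, monotone_id.add (partialSups rowSup).monotone,
    fun i => i.le_add_right _, fun i l hl => ?_⟩
  calc w i l ≤ rowSup i := Finset.le_sup (Finset.mem_range_succ_iff.2 hl)
    _ ≤ partialSups rowSup i := le_partialSups rowSup i
    _ ≤ i + partialSups rowSup i := Nat.le_add_left _ _

/-- `h : {α | α < γ} → ℕ` is finite-to-one and coheres with all the earlier functions `e β`,
`β < γ`, in Todorcevic's subadditive sense. The values of `h` outside `{α | α < γ}`, and those of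
`e β` outside `{α | α ≤ β}`, are irrelevant. -/
structure IsCoherentAt {Ω : Type*} [LinearOrder Ω] (e : Ω → Ω → ℕ) (γ : Ω) (h : Ω → ℕ) :
    Prop where
  le_max {α β : Ω} (hαβ : α ≤ β) (hβγ : β < γ) : h α ≤ max (e β α) (h β)
  lower_le_max {α β : Ω} (hαβ : α ≤ β) (hβγ : β < γ) : e β α ≤ max (h α) (h β)
  finite_le (m : ℕ) : {α | α < γ ∧ h α ≤ m}.Finite

namespace IsCoherentAt

variable {Ω : Type*} [LinearOrder Ω] {e : Ω → Ω → ℕ} {γ : Ω} {h : Ω → ℕ}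

theorem congr {e' : Ω → Ω → ℕ} (hee' : Set.EqOn e e' (Set.Iio γ)) (he : IsCoherentAt e γ h) :
    IsCoherentAt e' γ h where
  le_max hαβ hβγ := hee' hβγ ▸ he.le_max hαβ hβγ
  lower_le_max hαβ hβγ := hee' hβγ ▸ he.lower_le_max hαβ hβγ
  finite_le := he.finite_le

theorem of_isMin (hγ : IsMin γ) : IsCoherentAt e γ h where
  le_max _ hβγ := absurd hβγ hγ.not_lt
  lower_le_max _ hβγ := absurd hβγ hγ.not_lt
  finite_le m := by simp [hγ.not_lt]

theorem self_le_max_of_le (he : IsCoherentAt e γ (e γ)) {α β : Ω} (hαβ : α ≤ β) (hβγ : β ≤ γ) :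
    e γ α ≤ max (e β α) (e γ β) := by
  rcases hβγ.lt_or_eq with hβγ | rfl
  exacts [he.le_max hαβ hβγ, le_max_left _ _]

theorem self_lower_le_max_of_le (he : IsCoherentAt e γ (e γ)) {α β : Ω} (hαβ : α ≤ β)
    (hβγ : β ≤ γ) : e β α ≤ max (e γ α) (e γ β) := by
  rcases hβγ.lt_or_eq with hβγ | rfl
  exacts [he.lower_le_max hαβ hβγ, le_max_left _ _]

theorem finite_self_le (he : IsCoherentAt e γ (e γ)) (m : ℕ) :
    {α | α ≤ γ ∧ e γ α ≤ m}.Finite := by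
  refine ((he.finite_le m).insert γ).subset ?_
  rintro α ⟨hαγ, hα⟩
  exact hαγ.eq_or_lt.imp_right fun hαγ => ⟨hαγ, hα⟩

end IsCoherentAt

section Extension

open Function

variable {Ω : Type*} [LinearOrder Ω] {e : Ω → Ω → ℕ} {γ : Ω} {c : ℕ → Ω} {k : ℕ → ℕ}

/-- The least `i` with `α ≤ c i`; the junk value `0` if there is none. -/
noncomputable def firstIndex (c : ℕ → Ω) (α : Ω) : ℕ := sInf {i | α ≤ c i}

theorem le_firstIndex {α : Ω} (hα : ∃ i, α ≤ c i) : α ≤ c (firstIndex c α) := Nat.sInf_mem hα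

theorem firstIndex_le_firstIndex {α β : Ω} (hαβ : α ≤ β) (hβ : ∃ i, β ≤ c i) :
    firstIndex c α ≤ firstIndex c β :=
  Nat.sInf_le (hαβ.trans (le_firstIndex hβ))

/-- The function on `{α | α < γ}` glued from the functions `e (c i)` along a sequence `c` cofinal
below `γ`; raising the values in the `i`-th block to at least `k i` makes it finite-to-one and
absorbs the discrepancies between the functions `e (c i)`. -/
noncomputable def gluedAlong (e : Ω → Ω → ℕ) (c : ℕ → Ω) (k : ℕ → ℕ) (α : Ω) : ℕ :=
  max (e (c (firstIndex c α)) α) (k (firstIndex c α))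

theorem finite_gluedAlong_le (hfin : ∀ i m, {α | α ≤ c i ∧ e (c i) α ≤ m}.Finite)
    (hk : ∀ i, i ≤ k i) (hc : ∀ α < γ, ∃ i, α ≤ c i) (m : ℕ) :
    {α | α < γ ∧ gluedAlong e c k α ≤ m}.Finite := by
  refine ((Set.finite_Iic m).biUnion fun i _ => hfin i m).subset ?_
  rintro α ⟨hαγ, hα⟩
  have index_le : firstIndex c α ≤ m := (hk _).trans ((le_max_right _ _).trans hα)
  exact Set.mem_biUnion index_le ⟨le_firstIndex (hc α hαγ), (le_max_left _ _).trans hα⟩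

theorem isCoherentAt_gluedAlong (he : ∀ β < γ, IsCoherentAt e β (e β)) (hc_mono : Monotone c)
    (hc_lt : ∀ i, c i < γ) (hc : ∀ α < γ, ∃ i, α ≤ c i) (hk_mono : Monotone k)
    (hk : ∀ i, i ≤ k i) (hek : ∀ i, ∀ l ≤ i, e (c i) (c l) ≤ k i) :
    IsCoherentAt e γ (gluedAlong e c k) := by
  have coherence {α β : Ω} (hαβ : α ≤ β) (hβγ : β < γ) :
      gluedAlong e c k α ≤ max (e β α) (gluedAlong e c k β) ∧
        e β α ≤ max (gluedAlong e c k α) (gluedAlong e c k β) := by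
    unfold gluedAlong
    set i := firstIndex c α
    set j := firstIndex c β
    have hij : i ≤ j := firstIndex_le_firstIndex hαβ (hc β hβγ)
    have hα : α ≤ c i := le_firstIndex (hc α (hαβ.trans_lt hβγ))
    have hβ : β ≤ c j := le_firstIndex (hc β hβγ)
    have hcj := he (c j) (hc_lt j)
    have := hcj.self_le_max_of_le hαβ hβ
    have := hcj.self_lower_le_max_of_le hαβ hβ
    have := hcj.self_le_max_of_le hα (hc_mono hij)
    have := hcj.self_lower_le_max_of_le hα (hc_mono hij)
    have := hek j i hij
    have := hk_mono hij
    omega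
  exact ⟨fun hαβ hβγ => (coherence hαβ hβγ).1, fun hαβ hβγ => (coherence hαβ hβγ).2,
    finite_gluedAlong_le (fun i => (he _ (hc_lt i)).finite_self_le) hk hc⟩

theorem exists_isCoherentAt_and_le [Countable (Set.Iio γ)]
    (he : ∀ β < γ, IsCoherentAt e β (e β)) {x : Ω → ℕ}
    (hx : ∀ α β, α ≤ β → β < γ → x α ≤ max (e β α) (x β)) :
    ∃ h, IsCoherentAt e γ h ∧ ∀ α < γ, x α ≤ h α := by
  by_cases hγ : IsMin γ
  · exact ⟨x, .of_isMin hγ, fun _ _ => le_rfl⟩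
  obtain ⟨c, hc_mono, hc_lt, hc⟩ := exists_monotone_cofinal_seq hγ
  obtain ⟨k, hk_mono, hk, hwk⟩ :=
    exists_monotone_forall_le fun i l => max (x (c i)) (e (c i) (c l))
  refine ⟨gluedAlong e c k, isCoherentAt_gluedAlong he hc_mono hc_lt hc hk_mono hk
    fun i l hl => (le_max_right _ _).trans (hwk i l hl), fun α hα => ?_⟩
  calc x α ≤ max (e (c (firstIndex c α)) α) (x (c (firstIndex c α))) :=
        hx α _ (le_firstIndex (hc α hα)) (hc_lt _)
    _ ≤ gluedAlong e c k α := max_le_max_left _ ((le_max_left _ _).trans (hwk _ _ le_rfl))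

theorem exists_forall_isCoherentAt_and_le [WellFoundedLT Ω] [∀ γ : Ω, Countable (Set.Iio γ)]
    {x : Ω → Ω → ℕ} (hx : ∀ α β γ, α ≤ β → β ≤ γ → x α γ ≤ max (x α β) (x β γ)) :
    ∃ e : Ω → Ω → ℕ, ∀ γ, IsCoherentAt e γ (e γ) ∧ ∀ α < γ, x α γ ≤ e γ α := by
  refine exists_forall_of_exists_update ?_ ?_
  · rintro e e' γ hee' ⟨he, hle⟩
    rw [← hee' Set.self_mem_Iic]
    exact ⟨he.congr (hee'.mono Set.Iio_subset_Iic_self), hle⟩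
  · intro e γ he
    have hxe (α β : Ω) (hαβ : α ≤ β) (hβγ : β < γ) : x α γ ≤ max (e β α) (x β γ) := by
      rcases hαβ.lt_or_eq with hαβ | rfl
      · exact (hx α β γ hαβ.le hβγ.le).trans (max_le_max_right _ ((he β hβγ).2 α hαβ))
      · exact le_max_right _ _
    obtain ⟨h, hh, hle⟩ := exists_isCoherentAt_and_le (fun β hβ => (he β hβ).1) hxe
    refine ⟨h, ?_⟩
    rw [update_self]
    exact ⟨hh.congr fun β hβ => (update_of_ne (ne_of_lt hβ) _ _).symm, hle⟩

end Extension

/-! ### The ladder map of a coherent sequence and a dominating chain -/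

section LadderMapOf

open Filter

variable {Ω : Type*} [LinearOrder Ω] {e : Ω → Ω → ℕ} {g : Ω → ℕ → ℕ}

/-- The map `ρ(α, γ) = max (e γ α) (g γ)` for `α < γ`: the coherent sequence `e` makes `⊴_ρ` a
lower finite lattice order, the chain `g` makes it maximal. -/
def ladderMapOf (e : Ω → Ω → ℕ) (g : Ω → ℕ → ℕ) (α γ : Ω) (n : ℕ) : ℕ :=
  if α < γ then max (e γ α) (g γ n) else 0

theorem ladderMapOf_self (α : Ω) (n : ℕ) : ladderMapOf e g α α n = 0 := if_neg (lt_irrefl α)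

theorem ladderMapOf_of_lt {α γ : Ω} (hαγ : α < γ) (n : ℕ) :
    ladderMapOf e g α γ n = max (e γ α) (g γ n) := if_pos hαγ

theorem isLadderMap_ladderMapOf (he : ∀ γ, IsCoherentAt e γ (e γ)) (hg_mono : ∀ γ, Monotone (g γ))
    (hge : ∀ β γ, β < γ → ∀ n, g β n ≤ max (g γ n) (e γ β)) : IsLadderMap (ladderMapOf e g) where
  self_eq_zero := ladderMapOf_self
  monotone α γ n n' hn := by
    unfold ladderMapOf
    split_ifs
    exacts [max_le_max_left _ (hg_mono γ hn), le_rfl]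
  le_max_of_le_of_le {α β γ} hαβ hβγ n := by
    rcases hαβ.eq_or_lt with rfl | hαβ
    · exact le_max_right _ _
    rcases hβγ.eq_or_lt with rfl | hβγ
    · exact le_max_left _ _
    simp only [ladderMapOf_of_lt, hαβ, hβγ, hαβ.trans hβγ]
    have := (he γ).le_max hαβ.le hβγ
    omega
  lower_le_max {α β γ} hαβ hβγ n := by
    rcases hαβ.eq_or_lt with rfl | hαβ
    · simp [ladderMapOf_self]
    rcases hβγ.eq_or_lt with rfl | hβγ
    · exact le_max_left _ _
    simp only [ladderMapOf_of_lt, hαβ, hβγ, hαβ.trans hβγ]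
    have := (he γ).lower_le_max hαβ.le hβγ
    have := hge β γ hβγ n
    omega
  upper_le_max {α β γ} hαβ hβγ n := by
    rcases hβγ.eq_or_lt with rfl | hβγ
    · simp [ladderMapOf_self]
    simp only [ladderMapOf_of_lt, hβγ, hαβ.trans_lt hβγ]
    omega
  finite_le γ m := by
    refine (((he γ).finite_le m).insert γ).subset ?_
    rintro α ⟨hαγ, hα⟩
    refine hαγ.eq_or_lt.imp_right fun hαγ => ⟨hαγ, ?_⟩
    rw [ladderMapOf_of_lt hαγ] at hα
    exact (le_max_left _ _).trans hα

theorem exists_gt_eventuallyLE {d : Ω → ℕ → ℕ} (hd : IsDominating (Set.range d))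
    (hdg : ∀ γ, d γ ≤ᶠ[atTop] g γ) (hg : ∀ β γ, β ≤ γ → g β ≤ᶠ[atTop] g γ) (δ : Ω)
    (f : ℕ → ℕ) : ∃ γ > δ, f ≤ᶠ[atTop] g γ := by
  obtain ⟨_, ⟨γ, rfl⟩, hγ⟩ := hd (f ⊔ g δ)
  have sup_lt : ∀ᶠ n in atTop, f n < g γ n ∧ g δ n < g γ n := by
    filter_upwards [hγ, hdg γ] with n hlt hle
    exact sup_lt_iff.1 (hlt.trans_le hle)
  refine ⟨γ, lt_of_not_ge fun hγδ => ?_, sup_lt.mono fun n hn => hn.1.le⟩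
  obtain ⟨n, hlt, hle⟩ := (sup_lt.and (hg γ δ hγδ)).exists
  exact hlt.2.not_ge hle

theorem isCofinallyDominating_ladderMapOf (hg : ∀ (δ : Ω) f, ∃ γ > δ, f ≤ᶠ[atTop] g γ) :
    IsCofinallyDominating (ladderMapOf e g) := by
  intro α δ f
  obtain ⟨γ, hγ, hfγ⟩ := hg (max α δ) f
  obtain ⟨hαγ, hδγ⟩ := max_lt_iff.1 hγ
  refine ⟨γ, hδγ, hfγ.mono fun n hn => ?_⟩
  rw [ladderMapOf_of_lt hαγ]
  exact hn.trans (le_max_right _ _)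

theorem exists_isLadderMap_isCofinallyDominating [WellFoundedLT Ω]
    [∀ γ : Ω, Countable (Set.Iio γ)] {d : Ω → ℕ → ℕ} (hd : IsDominating (Set.range d)) :
    ∃ ρ : Ω → Ω → ℕ → ℕ, IsLadderMap ρ ∧ IsCofinallyDominating ρ := by
  obtain ⟨g, hg_mono, hdg, hg⟩ := exists_monotone_eventuallyLE_chain d
  obtain ⟨e, he⟩ := exists_forall_isCoherentAt_and_le (x := fun α γ => dominationGap (g α) (g γ))
    fun α β γ hαβ hβγ => dominationGap_le_max (hg α β hαβ) (hg β γ hβγ)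
  refine ⟨ladderMapOf e g, isLadderMap_ladderMapOf (fun γ => (he γ).1) hg_mono ?_,
    isCofinallyDominating_ladderMapOf (exists_gt_eventuallyLE hd hdg hg)⟩
  exact fun β γ hβγ n => (le_max_dominationGap (hg β γ hβγ.le) n).trans
    (max_le_max_left _ ((he γ).2 β hβγ))

end LadderMapOf

/-! ### The ladder over `ω₁` -/

theorem mk_Omega1 : Cardinal.mk Omega1 = Cardinal.aleph 1 :=
  (Cardinal.mk_Iio_ordinal _).trans (by simp)

instance uncountable_Omega1 : Uncountable Omega1 := by
  rw [← Cardinal.aleph0_lt_mk_iff, mk_Omega1]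
  exact Cardinal.aleph0_lt_aleph_one

instance countable_Iio_Omega1 (γ : Omega1) : Countable (Set.Iio γ) := by
  have countable_Iio : (Set.Iio γ.1).Countable := by
    rw [← Set.countable_coe_iff, ← Cardinal.mk_le_aleph0_iff, Cardinal.mk_Iio_ordinal,
      Cardinal.lift_le_aleph0, ← Order.lt_succ_iff, Cardinal.succ_aleph0, ← Cardinal.lt_ord]
    exact γ.2
  exact (countable_Iio.preimage Subtype.val_injective).to_subtype

theorem exists_range_eq_of_mk_eq_aleph_one {A : Type} {D : Set A}
    (hD : Cardinal.mk D = Cardinal.aleph 1) : ∃ d : Omega1 → A, Set.range d = D := by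
  obtain ⟨d⟩ : Nonempty (Omega1 ≃ D) := by
    rw [← Cardinal.lift_mk_eq', mk_Omega1, hD]
    simp
  exact ⟨Subtype.val ∘ d, by rw [d.surjective.range_comp, Subtype.range_coe]⟩

theorem IsLadderMap.isOuterPoint {ρ : Omega1 → Omega1 → ℕ → ℕ} (hρ : IsLadderMap ρ) {Q : Type*}
    [Lattice Q] (hQ : IsNLadder Q 3) {I : Order.Ideal Q} {e : KType ≃ I}
    (he : ∀ x y, KRel ρ x y ↔ e x ≤ e y) {q : Q} (hq : q ∉ I) :
    IsOuterPoint ρ (fun p => (e (some p) : Q)) q where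
  finite_Iic := hQ.2.1
  le_iff := (he _ _).symm
  sup_eq hαβ n m n' m' := ((hρ.relIsSup_of_le hαβ n m n' m').coe_eq_sup he).symm
  le_sup_or a b c := hQ.le_sup_or_le_sup_or_le_sup hq (e a).2 (e b).2 (e c).2

theorem IsLadderMap.relIsMaximalNLadder_KRel {ρ : Omega1 → Omega1 → ℕ → ℕ} (hρ : IsLadderMap ρ)
    (hdom : IsCofinallyDominating ρ) : RelIsMaximalNLadder (KRel ρ) 3 := by
  refine ⟨hρ.relIsNLadder_KRel, ?_⟩
  rintro ⟨Q, _, I, hQ, hI, e, he⟩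
  obtain ⟨q, hq⟩ : ∃ q, q ∉ I := by
    simpa [Set.ne_univ_iff_exists_notMem] using hI.ne_univ
  exact (hρ.isOuterPoint hQ he hq).not_isCofinallyDominating hρ hdom

/-- if `𝔡 = ℵ₁`, i.e. there is a dominating family of functions
`ω → ω` of cardinality `ℵ₁`, then there exists a map `ρ` such that `(K, ⊴_ρ)`
is a maximal 3-ladder. -/
theorem exists_K_maximal_of_d_eq_aleph_one
    (hd : ∃ D : Set (ℕ → ℕ), IsDominating D ∧ Cardinal.mk D = Cardinal.aleph 1) :
    ∃ ρ : Omega1 → Omega1 → ℕ → ℕ,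
      (∀ α : Omega1, ∀ n : ℕ, ρ α α n = 0) ∧
      RelIsMaximalNLadder (KRel ρ) 3 := by
  obtain ⟨D, hD, hD_card⟩ := hd
  obtain ⟨d, rfl⟩ := exists_range_eq_of_mk_eq_aleph_one hD_card
  obtain ⟨ρ, hρ, hρ_dom⟩ := exists_isLadderMap_isCofinallyDominating hD
  exact ⟨ρ, hρ.self_eq_zero, hρ.relIsMaximalNLadder_KRel hρ_dom⟩
end
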